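/- arXiv:math/0703532 — 2 statements merged into one kernel-verified Lean document; each statement's English description precedes it below -/
import Mathlib

section
/- Fix g ≥ 1 and let Γ = Sp(2g, ℤ) be the integral symplectic group. Consider a walk setup on Γ (symmetric primitive adjacency matrix A : Fin n → Fin n → ℕ with vertex labels t : Fin n → Γ) such that the set {t i : i : Fin n} generates Γ. For each N, let q_N be (sum of the weights of walks w of length N such that the characteristic polynomial of the underlying 2g × 2g integer matrix of γ_w, mapped to ℚ[X], is not irreducible) / (sum of the weights of all walks of length N). Then q_N tends to 0 as N tends to infinity. -/
open scoped BigOperators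

section WalkPart

/-- extended transition matrix on vertices × group -/
noncomputable def extMat {ι G : Type*} [Group G] (A : ι → ι → ℕ) (t : ι → G) :
    Matrix (ι × G) (ι × G) ℕ :=
  open scoped Classical in
  fun s s' => if s'.2 = t s'.1 * s.2 then A s.1 s'.1 else 0

lemma prim_pow_pos {ι : Type*} [Fintype ι] [DecidableEq ι] (A : Matrix ι ι ℕ) (k : ℕ) (hk : 1 ≤ k)
    (h : ∀ i j, 0 < (A ^ k) i j) : ∀ m, k ≤ m → ∀ i j, 0 < (A ^ m) i j := by
  intro m hm
  induction m, hm using Nat.le_induction with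
  | base => exact h
  | succ m hm ih =>
    intro i j
    obtain ⟨k', rfl⟩ : ∃ k', k = k' + 1 := ⟨k - 1, by omega⟩
    have h1 := h i j
    rw [pow_succ, Matrix.mul_apply] at h1
    obtain ⟨l, -, hl⟩ := Finset.exists_ne_zero_of_sum_ne_zero h1.ne'
    rw [pow_succ, Matrix.mul_apply]
    refine Finset.sum_pos' (fun _ _ => Nat.zero_le _) ⟨l, Finset.mem_univ _, ?_⟩
    exact Nat.mul_pos (ih i l) (Nat.pos_of_ne_zero (right_ne_zero_of_mul hl))

lemma nat_mul_pos_iff {ι : Type*} [Fintype ι] (A B : Matrix ι ι ℕ) (i j : ι) :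
    0 < (A * B) i j ↔ ∃ l, 0 < A i l ∧ 0 < B l j := by
  rw [Matrix.mul_apply]
  simp [Finset.sum_pos_iff, Nat.pos_iff_ne_zero]

lemma reach_all {ι G : Type*} [Fintype ι] [DecidableEq ι] [Group G] [Finite G]
    (A : Matrix ι ι ℕ) (t : ι → G) (hsymm : ∀ i j, A i j = A j i)
    (K : ℕ) (hK : ∀ m, K ≤ m → ∀ i j, 0 < (A ^ m) i j)
    (hgen : Subgroup.closure (Set.range t) = ⊤) (hperf : commutator G = ⊤)
    (S : ℕ → ι → Set G)
    (hS : ∀ m j y, y ∈ S (m+1) j ↔ ∃ k, 0 < A k j ∧ (t j)⁻¹ * y ∈ S m k)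
    (i0 : ι) (h0 : (S 0 i0).Nonempty) :
    ∃ M, ∀ m, M ≤ m → ∀ j, S m j = Set.univ := by
  -- transfer
  have tr : ∀ l j k, 0 < (A ^ l) j k → ∃ g : G, ∀ m y, y ∈ S m j → g * y ∈ S (m + l) k := by
    intro l
    induction l with
    | zero =>
      intro j k h
      have : j = k := by
        by_contra hne
        simp [hne] at h
      subst this
      exact ⟨1, by simp⟩
    | succ l ih =>
      intro j k h
      rw [pow_succ, nat_mul_pos_iff] at h
      obtain ⟨q, h1, h2⟩ := h
      obtain ⟨g, hg⟩ := ih j q h1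
      refine ⟨t k * g, fun m y hy => ?_⟩
      rw [← add_assoc, hS]
      exact ⟨q, h2, by simpa [mul_assoc] using hg m y hy⟩
  -- max card
  have hbdd : ∃ s, (∃ m j, (S m j).ncard = s) ∧ ∀ m j, (S m j).ncard ≤ s := by
    have hb : ∀ m j, (S m j).ncard ≤ Nat.card G := fun m j => by
      rw [← Set.ncard_univ]; exact Set.ncard_le_ncard (Set.subset_univ _) (Set.toFinite _)
    let P : ℕ → Prop := fun s => ∃ m j, (S m j).ncard = s
    classical
    have hP : ∃ s, P s ∧ s ≤ Nat.card G := ⟨_, ⟨0, i0, rfl⟩, hb _ _⟩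
    obtain ⟨s, hs, hs'⟩ := hP
    refine ⟨Nat.findGreatest P (Nat.card G), Nat.findGreatest_spec hs' hs, fun m j => ?_⟩
    exact Nat.le_findGreatest (hb m j) ⟨m, j, rfl⟩
  obtain ⟨s, ⟨m0, j0, hm0⟩, hmax⟩ := hbdd
  have hspos : 0 < s := lt_of_lt_of_le (by rw [Set.ncard_pos]; exact h0) (hmax 0 i0)
  have hsub : ∀ (g : G) (m j m' j'), (∀ y ∈ S m j, g * y ∈ S m' j') → (S m j).ncard = s →
      (S m' j').ncard = s ∧ ∀ y, y ∈ S m j ↔ g * y ∈ S m' j' := by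
    intro g m j m' j' h hc
    have hinj : Function.Injective (fun y : G => g * y) := mul_right_injective g
    have himg : (fun y : G => g * y) '' S m j ⊆ S m' j' := by
      rintro _ ⟨y, hy, rfl⟩; exact h y hy
    have hc1 : ((fun y : G => g * y) '' S m j).ncard = s := by
      rw [Set.ncard_image_of_injective _ hinj, hc]
    have heq : (fun y : G => g * y) '' S m j = S m' j' :=
      Set.eq_of_subset_of_ncard_le himg (by rw [hc1]; exact hmax _ _) (Set.toFinite _)
    refine ⟨by rw [← heq, hc1], fun y => ⟨h y, fun hy => ?_⟩⟩
    rw [← heq] at hy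
    obtain ⟨z, hz, hzy⟩ := hy
    rwa [← hinj hzy]
  have hcard : ∀ m, m0 + K ≤ m → ∀ j, (S m j).ncard = s := by
    intro m hm j
    obtain ⟨g, hg⟩ := tr (m - m0) j0 j (hK _ (by omega) _ _)
    have := hsub g m0 j0 m j (fun y hy => by
      have := hg m0 y hy
      rwa [show m0 + (m - m0) = m by omega] at this) hm0
    exact this.1
  have hstep : ∀ m, m0 + K ≤ m → ∀ j k, 0 < A j k → ∀ y, y ∈ S m j ↔ t k * y ∈ S (m+1) k := by
    intro m hm j k hjk
    exact (hsub (t k) m j (m+1) k (fun y hy => by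
      rw [hS]; exact ⟨j, hjk, by simpa using hy⟩) (hcard m hm j)).2
  have heven : ∀ m, m0 + K ≤ m → ∀ l j k, 0 < (A ^ (2*l)) j k → S m j = S m k := by
    intro m hm l
    induction l with
    | zero =>
      intro j k h
      have : j = k := by
        by_contra hne
        simp [hne] at h
      rw [this]
    | succ l ih =>
      intro j k h
      rw [show 2 * (l+1) = 2*l + 1 + 1 by ring, pow_succ, nat_mul_pos_iff] at h
      obtain ⟨q, h1, h2⟩ := h
      rw [pow_succ, nat_mul_pos_iff] at h1
      obtain ⟨r, h3, h4⟩ := h1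
      rw [ih j r h3]
      ext y
      rw [hstep m hm r q h4, hstep m hm k q (by rw [hsymm]; exact h2)]
  have hall : ∀ m, m0 + K ≤ m → ∀ j k, S m j = S m k := by
    intro m hm j k
    exact heven m hm K j k (hK _ (by omega) _ _)
  have hnb : ∀ k, ∃ j, 0 < A j k := by
    intro k
    have := hK (K+1) (by omega) k k
    rw [pow_succ, nat_mul_pos_iff] at this
    obtain ⟨q, _, h⟩ := this
    exact ⟨q, h⟩
  have hstep2 : ∀ m, m0 + K ≤ m → ∀ k y, y ∈ S m i0 ↔ t k * y ∈ S (m+1) i0 := by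
    intro m hm k y
    obtain ⟨j, hj⟩ := hnb k
    rw [hall m hm i0 j, hall (m+1) (by omega) i0 k]
    exact hstep m hm j k hj y
  -- stabilizer
  let H : Subgroup G :=
    { carrier := {h | ∀ m, m0 + K ≤ m → ∀ y, y ∈ S m i0 ↔ h * y ∈ S m i0}
      mul_mem' := by
        intro a b ha hb m hm y
        rw [hb m hm, ha m hm, mul_assoc]
      one_mem' := by intro m hm y; simp
      inv_mem' := by
        intro a ha m hm y
        rw [ha m hm (a⁻¹ * y)]; simp }
  have hH1 : ∀ k l, (t k)⁻¹ * t l ∈ H := by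
    intro k l m hm y
    rw [hstep2 m hm l y, hstep2 m hm k ((t k)⁻¹ * t l * y)]
    simp [mul_assoc]
  have hconj : ∀ k h, h ∈ H → (t k)⁻¹ * h * t k ∈ H := by
    intro k h hh m hm y
    rw [hstep2 m hm k y, hstep2 m hm k ((t k)⁻¹ * h * t k * y), hh (m+1) (by omega)]
    simp [mul_assoc]
  have hnorm : ∀ k, t k ∈ Subgroup.normalizer (H : Set G) := by
    intro k
    rw [← inv_mem_iff]
    have hmap : H.map (MulAut.conj (t k)⁻¹).toMonoidHom = H := by
      apply Subgroup.eq_of_le_of_card_ge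
      · rintro _ ⟨h, hh, rfl⟩
        simpa using hconj k h hh
      · rw [Subgroup.card_map_of_injective (MulAut.conj (t k)⁻¹).injective]
    rw [Subgroup.mem_normalizer_iff]
    intro h
    constructor
    · intro hh
      simpa using hconj k h hh
    · intro hh
      have : (t k)⁻¹ * h * (t k)⁻¹⁻¹ ∈ H.map (MulAut.conj (t k)⁻¹).toMonoidHom := by
        rw [hmap]; exact hh
      obtain ⟨h', hh', he⟩ := this
      have : h' = h := by simpa using he
      rwa [← this]
  have hN : H.Normal := by
    rw [← Subgroup.normalizer_eq_top_iff, eq_top_iff, ← hgen, Subgroup.closure_le]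
    rintro _ ⟨k, rfl⟩
    exact hnorm k
  have hcomm : commutator G ≤ H := by
    rw [← Subgroup.Normal.quotient_commutative_iff_commutator_le]
    have hz : ∀ x : G, (x : G ⧸ H) ∈ Subgroup.zpowers ((t i0 : G) : G ⧸ H) := by
      have : (⊤ : Subgroup G) ≤ (Subgroup.zpowers ((t i0 : G) : G ⧸ H)).comap (QuotientGroup.mk' H) := by
        rw [← hgen, Subgroup.closure_le]
        rintro _ ⟨k, rfl⟩
        have : ((t k : G) : G ⧸ H) = (t i0 : G) := (QuotientGroup.eq.2 (hH1 k i0))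
        simp [this]
      intro x
      exact this (Subgroup.mem_top x)
    refine ⟨⟨fun a b => ?_⟩⟩
    induction a using QuotientGroup.induction_on with | H a => ?_
    induction b using QuotientGroup.induction_on with | H b => ?_
    obtain ⟨p, hp⟩ := hz a
    obtain ⟨q, hq⟩ := hz b
    simp only at hp hq
    rw [← hp, ← hq, ← zpow_add, ← zpow_add, add_comm]
  have hHtop : ∀ x, x ∈ H := by
    intro x
    apply hcomm
    rw [hperf]; trivial
  refine ⟨m0 + K, fun m hm j => ?_⟩
  rw [Set.eq_univ_iff_forall]
  intro x
  have hne : (S m j).Nonempty := by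
    rw [← Set.ncard_pos, hcard m hm j]; exact hspos
  obtain ⟨y, hy⟩ := hne
  rw [hall m hm j i0] at hy ⊢
  have := (hHtop (x * y⁻¹) m hm y).1 hy
  simpa using this

lemma extMat_prim {ι G : Type*} [Fintype ι] [DecidableEq ι] [Group G] [Fintype G] [DecidableEq G]
    (A : ι → ι → ℕ) (t : ι → G) (hsymm : ∀ i j, A i j = A j i)
    (hprim : ∃ k, 1 ≤ k ∧ ∀ i j, 0 < ((Matrix.of A) ^ k) i j)
    (hgen : Subgroup.closure (Set.range t) = ⊤) (hperf : commutator G = ⊤) :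
    ∃ m, 1 ≤ m ∧ ∀ s s', 0 < ((extMat A t) ^ m) s s' := by
  obtain ⟨k, hk, hpos⟩ := hprim
  have hK := prim_pow_pos (Matrix.of A) k hk hpos
  have key : ∀ s : ι × G, ∃ M, ∀ m, M ≤ m → ∀ s', 0 < ((extMat A t) ^ m) s s' := by
    intro s
    obtain ⟨M, hM⟩ := reach_all (Matrix.of A) t hsymm k hK hgen hperf
      (fun m j => {y | 0 < ((extMat A t) ^ m) s (j, y)}) (by
        intro m j y
        simp only [Set.mem_ofPred_eq]
        rw [pow_succ, nat_mul_pos_iff]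
        constructor
        · rintro ⟨⟨q, z⟩, h1, h2⟩
          unfold extMat at h2
          split_ifs at h2 with h
          · refine ⟨q, h2, ?_⟩
            simp only at h
            rw [h]; simpa using h1
          · simp at h2
        · rintro ⟨q, h1, h2⟩
          refine ⟨(q, (t j)⁻¹ * y), h2, ?_⟩
          simpa [extMat] using h1) s.1 ⟨s.2, by simp⟩
    refine ⟨M, fun m hm s' => ?_⟩
    have := hM m hm s'.1
    have h2 : s'.2 ∈ {y | 0 < ((extMat A t) ^ m) s (s'.1, y)} := by rw [this]; trivial
    exact h2
  choose M hM using key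
  refine ⟨(∑ s, M s) + 1, by omega, fun s s' => hM s _ ?_ s'⟩
  have := Finset.single_le_sum (f := M) (fun i _ => Nat.zero_le _) (Finset.mem_univ s)
  omega

/-- fibre sums of a matrix over vertices × group -/
def FibSum {ι G : Type*} [Fintype G] (C : Matrix (ι × G) (ι × G) ℝ) (D : Matrix ι ι ℝ) : Prop :=
  (∀ i x j, ∑ y, C (i, x) (j, y) = D i j) ∧ (∀ i j y, ∑ x, C (i, x) (j, y) = D i j)

lemma FibSum.mul {ι G : Type*} [Fintype ι] [Fintype G] {C₁ C₂ : Matrix (ι × G) (ι × G) ℝ}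
    {D₁ D₂ : Matrix ι ι ℝ} (h₁ : FibSum C₁ D₁) (h₂ : FibSum C₂ D₂) :
    FibSum (C₁ * C₂) (D₁ * D₂) := by
  constructor
  · intro i x j
    simp only [Matrix.mul_apply]
    rw [Finset.sum_comm, Fintype.sum_prod_type]
    refine Finset.sum_congr rfl fun k _ => ?_
    simp_rw [← Finset.mul_sum, h₂.1, ← Finset.sum_mul, h₁.1]
  · intro i j y
    simp only [Matrix.mul_apply]
    rw [Finset.sum_comm, Fintype.sum_prod_type]
    refine Finset.sum_congr rfl fun k _ => ?_
    simp_rw [← Finset.sum_mul, h₁.2, ← Finset.mul_sum, h₂.2]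

lemma FibSum.one {ι G : Type*} [Fintype G] [DecidableEq ι] [DecidableEq G] :
    FibSum (1 : Matrix (ι × G) (ι × G) ℝ) (1 : Matrix ι ι ℝ) := by
  constructor
  · intro i x j
    by_cases h : i = j <;> simp [Matrix.one_apply, h]
  · intro i j y
    by_cases h : i = j <;> simp [Matrix.one_apply, h]

lemma FibSum.pow {ι G : Type*} [Fintype ι] [Fintype G] [DecidableEq ι] [DecidableEq G]
    {C : Matrix (ι × G) (ι × G) ℝ}
    {D : Matrix ι ι ℝ} (h : FibSum C D) (m : ℕ) : FibSum (C ^ m) (D ^ m) := by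
  induction m with
  | zero => simpa using FibSum.one
  | succ m ih => rw [pow_succ, pow_succ]; exact ih.mul h

/-- lower bound on conditional distribution on the group -/
def LowB {ι G : Type*} [Fintype G] (c : ℝ) (a : ι × G → ℝ) : Prop :=
  ∀ i x, c * ∑ z, a (i, z) ≤ a (i, x)

lemma doeblin {ι G : Type*} [Fintype ι] [Fintype G]
    {C : Matrix (ι × G) (ι × G) ℝ} {D : Matrix ι ι ℝ} (h : FibSum C D) (β : ℝ)
    (hβ : ∀ i x j y, β * D i j ≤ C (i, x) (j, y)) (a : ι × G → ℝ) (c : ℝ) (ha : LowB c a) :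
    LowB (c + β * (1 - Fintype.card G * c)) (Matrix.vecMul a C) := by
  intro j y
  have e1 : ∑ z, Matrix.vecMul a C (j, z) = ∑ i, (∑ x, a (i, x)) * D i j := by
    simp only [Matrix.vecMul, dotProduct]
    rw [Finset.sum_comm, Fintype.sum_prod_type]
    refine Finset.sum_congr rfl fun k _ => ?_
    simp_rw [← Finset.mul_sum, h.1, ← Finset.sum_mul]
  rw [e1, Finset.mul_sum]
  simp only [Matrix.vecMul, dotProduct]
  rw [Fintype.sum_prod_type]
  refine Finset.sum_le_sum fun i _ => ?_
  set s := ∑ x, a (i, x) with hs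
  have e2 : ∑ x, (a (i, x) - c * s) * (β * D i j) ≤ ∑ x, (a (i, x) - c * s) * C (i, x) (j, y) :=
    Finset.sum_le_sum fun x _ =>
      mul_le_mul_of_nonneg_left (hβ i x j y) (sub_nonneg.2 (ha i x))
  rw [← Finset.sum_mul, Finset.sum_sub_distrib, ← hs] at e2
  simp_rw [sub_mul] at e2
  have e3 : ∑ x, c * s * C (i, x) (j, y) = c * s * D i j := by rw [← Finset.mul_sum, h.2]
  rw [Finset.sum_sub_distrib, e3] at e2
  simp only [Finset.sum_const, Finset.card_univ, nsmul_eq_mul] at e2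
  linarith [e2]

/-- real version of the extended matrix -/
noncomputable def extMatR {ι G : Type*} [Group G] (A : ι → ι → ℕ) (t : ι → G) :
    Matrix (ι × G) (ι × G) ℝ := (extMat A t).map (Nat.castRingHom ℝ)

lemma extMatR_fib {ι G : Type*} [Group G] [Fintype G] (A : ι → ι → ℕ) (t : ι → G) :
    FibSum (extMatR A t) (Matrix.of fun i j => (A i j : ℝ)) := by
  classical
  constructor
  · intro i x j
    simp [extMatR, extMat]
  · intro i j y
    simp only [extMatR, extMat, Matrix.map_apply, Matrix.of_apply]
    rw [Finset.sum_eq_single ((t j)⁻¹ * y)]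
    · simp
    · intro b _ hb
      rw [if_neg]
      · simp
      · intro h; apply hb; rw [h]; simp
    · simp

lemma extMatR_pow {ι G : Type*} [Group G] [Fintype G] [Fintype ι] [DecidableEq ι] [DecidableEq G]
    (A : ι → ι → ℕ) (t : ι → G) (m : ℕ) (s s' : ι × G) :
    ((extMatR A t) ^ m) s s' = (((extMat A t) ^ m) s s' : ℕ) := by
  have : (extMatR A t) ^ m = (Nat.castRingHom ℝ).mapMatrix ((extMat A t) ^ m) := by
    rw [map_pow]; rfl
  rw [this]; rfl

/-- initial vector -/
noncomputable def initVec {ι G : Type*} (t : ι → G) : ι × G → ℝ :=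
  open scoped Classical in fun s => if s.2 = t s.1 then 1 else 0

lemma walk_sum {ι G : Type*} [Group G] [Fintype G] [Fintype ι] [DecidableEq ι] [DecidableEq G]
    (A : ι → ι → ℕ) (t : ι → G) (N : ℕ) (F : ι × G → ℝ) :
    ∑ w : Fin (N + 1) → ι, ((∏ j : Fin N, A (w j.castSucc) (w j.succ) : ℕ) : ℝ) *
        F (w (Fin.last N), (List.ofFn fun j => t (w j)).reverse.prod) =
      dotProduct (Matrix.vecMul (initVec t) ((extMatR A t) ^ N)) F := by
  induction N generalizing F with
  | zero =>
    rw [pow_zero, Matrix.vecMul_one]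
    simp only [dotProduct, initVec]
    rw [Fintype.sum_prod_type]
    rw [← (Equiv.funUnique (Fin 1) ι).sum_comp]
    refine Finset.sum_congr rfl fun w _ => ?_
    simp
  | succ N ih =>
    rw [pow_succ, ← Matrix.vecMul_vecMul, ← Matrix.dotProduct_mulVec, ← ih]
    rw [← (Fin.snocEquiv (fun _ : Fin (N+2) => ι)).sum_comp, Fintype.sum_prod_type, Finset.sum_comm]
    refine Finset.sum_congr rfl fun w _ => ?_
    simp only [Matrix.mulVec, dotProduct]
    rw [Fintype.sum_prod_type, Finset.mul_sum]
    refine Finset.sum_congr rfl fun j _ => ?_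
    have e : (List.ofFn fun q => t (Fin.snoc (α := fun _ => ι) w j q)).reverse.prod =
        t j * (List.ofFn fun q => t (w q)).reverse.prod := by
      rw [List.ofFn_succ']
      simp
    rw [Finset.sum_eq_single (t j * (List.ofFn fun q => t (w q)).reverse.prod)]
    · simp only [Fin.snocEquiv, Equiv.coe_fn_mk, e]
      rw [Fin.prod_univ_castSucc]
      simp only [Fin.snoc_castSucc, ← Fin.castSucc_succ, Fin.succ_last, Fin.snoc_last]
      simp [extMatR, extMat]
      ring
    · intro y _ hy
      simp only [extMatR, extMat, Matrix.map_apply, if_neg hy, map_zero, zero_mul]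
    · simp

lemma walk_bad {ι G : Type*} [Fintype ι] [DecidableEq ι] [Group G] [Fintype G] [DecidableEq G]
    (A : ι → ι → ℕ) (t : ι → G) (hsymm : ∀ i j, A i j = A j i)
    (hprim : ∃ k, 1 ≤ k ∧ ∀ i j, 0 < ((Matrix.of A) ^ k) i j)
    (hgen : Subgroup.closure (Set.range t) = ⊤) (hperf : commutator G = ⊤)
    (Bad : Finset G) (ε : ℝ) (hε : 0 < ε) :
    ∀ᶠ N : ℕ in Filter.atTop,
      ∑ w : Fin (N + 1) → ι, ((∏ j : Fin N, A (w j.castSucc) (w j.succ) : ℕ) : ℝ) *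
        (if (List.ofFn fun j => t (w j)).reverse.prod ∈ Bad then 1 else 0) ≤
      ((Bad.card : ℝ) / Fintype.card G + ε) *
      ∑ w : Fin (N + 1) → ι, ((∏ j : Fin N, A (w j.castSucc) (w j.succ) : ℕ) : ℝ) := by
  obtain ⟨m, hm1, hm⟩ := extMat_prim A t hsymm hprim hgen hperf
  set B := extMatR A t with hB
  set D : Matrix ι ι ℝ := Matrix.of fun i j => (A i j : ℝ) with hD
  have hfib : FibSum B D := extMatR_fib A t
  have hfibm := hfib.pow m
  set gam : ℝ := (Fintype.card G : ℝ) with hgam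
  have hgpos : 0 < gam := by rw [hgam]; exact_mod_cast Fintype.card_pos
  have hBm : ∀ s s', 1 ≤ (B ^ m) s s' := by
    intro s s'
    rw [hB, extMatR_pow]
    exact_mod_cast hm s s'
  have hDpos : ∀ i j, 0 ≤ (D ^ m) i j := by
    intro i j
    rw [← hfibm.1 i 1 j]
    exact Finset.sum_nonneg fun y _ => zero_le_one.trans (hBm _ _)
  set X : ℝ := ∑ i, ∑ j, (D ^ m) i j with hX
  have hX0 : 0 ≤ X := Finset.sum_nonneg fun i _ => Finset.sum_nonneg fun j _ => hDpos i j
  have hDX : ∀ i j, (D ^ m) i j ≤ X := by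
    intro i j
    refine le_trans (Finset.single_le_sum (f := fun j => (D^m) i j) (fun j _ => hDpos i j)
      (Finset.mem_univ j)) ?_
    exact Finset.single_le_sum (f := fun i => ∑ j, (D^m) i j)
      (fun i _ => Finset.sum_nonneg fun j _ => hDpos i j) (Finset.mem_univ i)
  have hg1 : 1 ≤ gam := by rw [hgam]; exact_mod_cast Fintype.card_pos
  set β : ℝ := 1 / (gam * (X + 1)) with hβ
  set θ : ℝ := 1 - gam * β with hθ
  have hθ' : θ = 1 - 1 / (X + 1) := by rw [hθ, hβ]; field_simp
  have hθ0 : 0 ≤ θ := by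
    rw [hθ', sub_nonneg, div_le_one (by linarith)]; linarith
  have hθ1 : θ < 1 := by
    rw [hθ']; have : 0 < 1 / (X + 1) := by positivity
    linarith
  have hβB : ∀ i x j y, β * (D ^ m) i j ≤ (B ^ m) (i, x) (j, y) := by
    intro i x j y
    refine le_trans ?_ (hBm _ _)
    rw [hβ, one_div, inv_mul_le_iff₀ (by positivity), mul_one]
    calc (D ^ m) i j ≤ X + 1 := by linarith [hDX i j]
      _ ≤ gam * (X + 1) := by nlinarith
  have hBnn : ∀ i x j y, 0 * D i j ≤ B (i, x) (j, y) := by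
    intro i x j y
    rw [zero_mul, hB]; simp [extMatR]
  have hlow0 : ∀ r, LowB 0 (Matrix.vecMul (initVec t) (B ^ r)) := by
    intro r
    induction r with
    | zero =>
      intro i x
      simp only [zero_mul, pow_zero, Matrix.vecMul_one, initVec]
      split_ifs <;> norm_num
    | succ r ih =>
      have := doeblin hfib 0 hBnn _ 0 ih
      rw [pow_succ, ← Matrix.vecMul_vecMul]
      simpa using this
  have hlow : ∀ q r, LowB ((1 - θ ^ q) / gam) (Matrix.vecMul (initVec t) (B ^ (r + m * q))) := by
    intro q r
    induction q with
    | zero => simpa using hlow0 r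
    | succ q ih =>
      have := doeblin hfibm β hβB _ _ ih
      rw [Matrix.vecMul_vecMul, ← pow_add] at this
      rw [show r + m * (q + 1) = r + m * q + m by ring]
      convert this using 1
      rw [pow_succ, hθ]
      field_simp
      ring
  have hT : Filter.Tendsto (fun N : ℕ => θ ^ (N / m)) Filter.atTop (nhds 0) :=
    (tendsto_pow_atTop_nhds_zero_of_lt_one hθ0 hθ1).comp
      (Nat.tendsto_div_const_atTop (by omega))
  filter_upwards [hT.eventually (gt_mem_nhds hε)] with N hN
  have e1 := walk_sum A t N (fun s => if s.2 ∈ Bad then 1 else 0)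
  have e2 := walk_sum A t N (fun _ => 1)
  simp only [mul_one] at e2
  rw [e1, e2]
  have hl := hlow (N / m) (N % m)
  rw [Nat.mod_add_div] at hl
  set a := Matrix.vecMul (initVec t) (B ^ N) with ha
  set c := (1 - θ ^ (N / m)) / gam with hc
  have hann : ∀ s, 0 ≤ a s := by
    intro s
    have := hlow0 N s.1 s.2
    simpa using this
  simp only [dotProduct]
  rw [Fintype.sum_prod_type, Fintype.sum_prod_type, Finset.mul_sum]
  refine Finset.sum_le_sum fun i _ => ?_
  simp only [mul_one, mul_ite, mul_zero]
  rw [← Finset.sum_filter, Finset.filter_mem_eq_inter, Finset.univ_inter]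
  set s := ∑ x, a (i, x) with hs
  have hs0 : 0 ≤ s := Finset.sum_nonneg fun x _ => hann _
  have hcompl : ∑ x ∈ Bad, a (i, x) + ∑ x ∈ Badᶜ, a (i, x) = s := Finset.sum_add_sum_compl _ _
  have hge : (Badᶜ.card : ℝ) * (c * s) ≤ ∑ x ∈ Badᶜ, a (i, x) := by
    rw [← nsmul_eq_mul, ← Finset.sum_const]
    exact Finset.sum_le_sum fun x _ => hl i x
  have hcc : (Badᶜ.card : ℝ) = gam - Bad.card := by
    rw [Finset.card_compl, Nat.cast_sub (Finset.card_le_univ _)]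
  have hbg : (Bad.card : ℝ) ≤ gam := by rw [hgam]; exact_mod_cast Finset.card_le_univ _
  rw [hcc] at hge
  have h1 : 1 - (gam - Bad.card) * c ≤ (Bad.card : ℝ) / gam + ε := by
    have h2 : θ ^ (N / m) * (gam - Bad.card) / gam ≤ θ ^ (N / m) := by
      rw [div_le_iff₀ hgpos]
      apply mul_le_mul_of_nonneg_left _ (pow_nonneg hθ0 _)
      have : (0:ℝ) ≤ Bad.card := Nat.cast_nonneg _
      linarith
    have h3 : 1 - (gam - Bad.card) * c = (Bad.card : ℝ) / gam + θ ^ (N / m) * (gam - Bad.card) / gam := by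
      rw [hc]; field_simp; ring
    rw [h3]; linarith
  have := mul_le_mul_of_nonneg_right h1 hs0
  linarith

end WalkPart
section SpPart
open Matrix

variable {l R : Type*} [DecidableEq l] [Fintype l] [CommRing R]

/-- symplectic form -/
noncomputable def om : (l ⊕ l → R) →ₗ[R] (l ⊕ l → R) →ₗ[R] R := Matrix.toLinearMap₂' R (J l R)

lemma om_eq (x y : l ⊕ l → R) : om x y = x ⬝ᵥ (J l R *ᵥ y) := by
  simp [om, Matrix.toLinearMap₂'_apply']

lemma om_formula (x y : l ⊕ l → R) :
    om x y = ∑ i, (x (Sum.inr i) * y (Sum.inl i) - x (Sum.inl i) * y (Sum.inr i)) := by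
  rw [om_eq]
  simp only [dotProduct, Fintype.sum_sum_type, J, fromBlocks_mulVec, Sum.elim_inl, Sum.elim_inr]
  simp only [zero_mulVec, neg_mulVec, one_mulVec, zero_add, add_zero, Pi.neg_apply, Function.comp]
  rw [← Finset.sum_add_distrib]
  exact Finset.sum_congr rfl fun i _ => by ring

lemma om_self (x : l ⊕ l → R) : om x x = 0 := by
  rw [om_formula]; exact Finset.sum_eq_zero fun i _ => by ring

lemma om_swap (x y : l ⊕ l → R) : om x y = - om y x := by
  rw [om_formula, om_formula, ← Finset.sum_neg_distrib]
  exact Finset.sum_congr rfl fun i _ => by ring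

lemma mem_sp_iff (M : Matrix (l ⊕ l) (l ⊕ l) R) :
    M ∈ symplecticGroup l R ↔ ∀ x y, om (M *ᵥ x) (M *ᵥ y) = om x y := by
  have key : ∀ x y, om (M *ᵥ x) (M *ᵥ y) = x ⬝ᵥ ((Mᵀ * J l R * M) *ᵥ y) := by
    intro x y
    rw [om_eq, ← Matrix.mulVec_mulVec, ← Matrix.mulVec_mulVec, Matrix.dotProduct_mulVec x,
      Matrix.vecMul_transpose]
  rw [SymplecticGroup.mem_iff']
  constructor
  · intro h x y
    rw [key, h, om_eq]
  · intro h
    ext i j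
    have := h (Pi.single i 1) (Pi.single j 1)
    rw [key, om_eq] at this
    simpa using this

/-- transvection matrix -/
noncomputable def tvMat (v : l ⊕ l → R) (a : R) : Matrix (l ⊕ l) (l ⊕ l) R :=
  1 + a • Matrix.vecMulVec v (J l R *ᵥ v)

lemma tvMat_mulVec (v : l ⊕ l → R) (a : R) (x : l ⊕ l → R) :
    tvMat v a *ᵥ x = x + (a * om x v) • v := by
  rw [tvMat, Matrix.add_mulVec, Matrix.one_mulVec, Matrix.smul_mulVec, Matrix.vecMulVec_mulVec,
    om_eq, dotProduct_comm]
  ext i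
  simp
  ring

lemma tvMat_mem (v : l ⊕ l → R) (a : R) : tvMat v a ∈ symplecticGroup l R := by
  rw [mem_sp_iff]
  intro x y
  rw [tvMat_mulVec, tvMat_mulVec]
  simp only [map_add, LinearMap.add_apply, map_smul, LinearMap.smul_apply, smul_eq_mul, om_self]
  rw [om_swap v y]
  ring

/-- transvection as group element -/
noncomputable def tv (v : l ⊕ l → R) (a : R) : symplecticGroup l R := ⟨tvMat v a, tvMat_mem v a⟩

lemma sp_ext {M N : symplecticGroup l R} (h : ∀ x, M.1 *ᵥ x = N.1 *ᵥ x) : M = N := by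
  apply Subtype.ext
  apply Matrix.ext_of_mulVec_single
  intro i
  exact h _

lemma sp_mul_mulVec (M N : symplecticGroup l R) (x : l ⊕ l → R) :
    (M * N).1 *ᵥ x = M.1 *ᵥ (N.1 *ᵥ x) := by
  rw [Matrix.mulVec_mulVec]; rfl

lemma sp_one_mulVec (x : l ⊕ l → R) : (1 : symplecticGroup l R).1 *ᵥ x = x := by
  change (1 : Matrix (l ⊕ l) (l ⊕ l) R) *ᵥ x = x
  simp

lemma sp_om (M : symplecticGroup l R) (x y : l ⊕ l → R) : om (M.1 *ᵥ x) (M.1 *ᵥ y) = om x y :=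
  (mem_sp_iff M.1).1 M.2 x y

lemma tv_mulVec (v : l ⊕ l → R) (a : R) (x : l ⊕ l → R) :
    (tv v a).1 *ᵥ x = x + (a * om x v) • v := tvMat_mulVec v a x

lemma tv_add (v : l ⊕ l → R) (a b : R) : tv v a * tv v b = tv v (a + b) := by
  apply sp_ext
  intro x
  rw [sp_mul_mulVec, tv_mulVec, tv_mulVec, tv_mulVec]
  simp only [map_add, LinearMap.add_apply, map_smul, LinearMap.smul_apply, smul_eq_mul, om_self]
  module

lemma tv_zero (v : l ⊕ l → R) : tv v 0 = 1 := by
  apply sp_ext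
  intro x
  rw [tv_mulVec, sp_one_mulVec]; simp

lemma tv_zero_left (a : R) : tv (0 : l ⊕ l → R) a = 1 := by
  apply sp_ext
  intro x
  rw [tv_mulVec, sp_one_mulVec]; simp

lemma tv_smul (v : l ⊕ l → R) (a c : R) : tv (c • v) a = tv v (c * c * a) := by
  apply sp_ext
  intro x
  rw [tv_mulVec, tv_mulVec]
  simp only [map_smul, smul_eq_mul]
  module

lemma tv_conj (M : symplecticGroup l R) (v : l ⊕ l → R) (a : R) :
    M * tv v a * M⁻¹ = tv (M.1 *ᵥ v) a := by
  rw [mul_inv_eq_iff_eq_mul]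
  apply sp_ext
  intro x
  rw [sp_mul_mulVec, sp_mul_mulVec, tv_mulVec, tv_mulVec, sp_om, Matrix.mulVec_add,
    Matrix.mulVec_smul]

/-- group generated by transvections along `U` -/
def tvGrp (U : Submodule R (l ⊕ l → R)) : Subgroup (symplecticGroup l R) :=
  Subgroup.closure {s | ∃ v ∈ U, ∃ a, s = tv v a}

lemma tv_mem_tvGrp (U : Submodule R (l ⊕ l → R)) {v : l ⊕ l → R} (hv : v ∈ U) (a : R) :
    tv v a ∈ tvGrp U := Subgroup.subset_closure ⟨v, hv, a, rfl⟩

lemma tvGrp_fix (U : Submodule R (l ⊕ l → R)) (w : l ⊕ l → R) (hw : ∀ u ∈ U, om w u = 0)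
    (s : symplecticGroup l R) (hs : s ∈ tvGrp U) : s.1 *ᵥ w = w := by
  induction hs using Subgroup.closure_induction with
  | mem x hx =>
    obtain ⟨v, hv, a, rfl⟩ := hx
    rw [tv_mulVec, hw v hv]; simp
  | one => exact sp_one_mulVec w
  | mul x y _ _ hx hy => rw [sp_mul_mulVec, hy, hx]
  | inv x _ hx =>
    conv_lhs => rw [← hx]
    rw [← sp_mul_mulVec, inv_mul_cancel, sp_one_mulVec]

variable {F : Type*} [Field F]

lemma move1 (U : Submodule F (l ⊕ l → F)) {x y : l ⊕ l → F} (hx : x ∈ U) (hy : y ∈ U)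
    (h : om x y ≠ 0) : ∃ s ∈ tvGrp U, s.1 *ᵥ x = y := by
  refine ⟨tv (y - x) (om x y)⁻¹, tv_mem_tvGrp U (U.sub_mem hy hx) _, ?_⟩
  rw [tv_mulVec, map_sub, om_self, sub_zero, inv_mul_cancel₀ h]
  simp

lemma move_any (U : Submodule F (l ⊕ l → F))
    (hU : ∀ x ∈ U, x ≠ 0 → ∃ z ∈ U, om x z ≠ 0)
    {x y : l ⊕ l → F} (hx : x ∈ U) (hy : y ∈ U) (hx0 : x ≠ 0) (hy0 : y ≠ 0) :
    ∃ s ∈ tvGrp U, s.1 *ᵥ x = y := by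
  have hz : ∃ z ∈ U, om x z ≠ 0 ∧ om z y ≠ 0 := by
    obtain ⟨z1, hz1, h1⟩ := hU x hx hx0
    obtain ⟨z2, hz2, h2⟩ := hU y hy hy0
    have h2' : om z2 y ≠ 0 := by rw [om_swap]; simpa using h2
    by_cases h3 : om z1 y = 0
    · by_cases h4 : om x z2 = 0
      · refine ⟨z1 + z2, U.add_mem hz1 hz2, ?_, ?_⟩
        · simpa [h4] using h1
        · simpa [h3] using h2'
      · exact ⟨z2, hz2, h4, h2'⟩
    · exact ⟨z1, hz1, h1, h3⟩
  obtain ⟨z, hzU, h1, h2⟩ := hz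
  obtain ⟨s, hs, hsx⟩ := move1 U hx hzU h1
  obtain ⟨s', hs', hsz⟩ := move1 U hzU hy h2
  exact ⟨s' * s, mul_mem hs' hs, by rw [sp_mul_mulVec, hsx, hsz]⟩

lemma move2a (U : Submodule F (l ⊕ l → F)) {e x y : l ⊕ l → F} (hx : x ∈ U) (hy : y ∈ U)
    (h : om x y ≠ 0) (he : om e x = om e y) : ∃ s ∈ tvGrp U, s.1 *ᵥ e = e ∧ s.1 *ᵥ x = y := by
  refine ⟨tv (y - x) (om x y)⁻¹, tv_mem_tvGrp U (U.sub_mem hy hx) _, ?_, ?_⟩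
  · rw [tv_mulVec, map_sub, he]; simp
  · rw [tv_mulVec, map_sub, om_self, sub_zero, inv_mul_cancel₀ h]
    simp

lemma move2 (U : Submodule F (l ⊕ l → F)) {e x y : l ⊕ l → F} (heU : e ∈ U) (hx : x ∈ U)
    (hy : y ∈ U) (h : om e x ≠ 0) (he : om e x = om e y) :
    ∃ s ∈ tvGrp U, s.1 *ᵥ e = e ∧ s.1 *ᵥ x = y := by
  by_cases h1 : om x y = 0
  · obtain ⟨s, hs, hse, hsx⟩ := move2a U (e := e) hx (U.add_mem heU hx)
      (by rw [map_add, om_self, add_zero, om_swap]; simpa using h) (by rw [map_add, om_self, zero_add])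
    obtain ⟨s', hs', hse', hsx'⟩ := move2a U (e := e) (U.add_mem heU hx) hy
      (by rw [map_add, LinearMap.add_apply, h1, add_zero, ← he]; exact h)
      (by rw [map_add, om_self, zero_add]; exact he)
    exact ⟨s' * s, mul_mem hs' hs, by rw [sp_mul_mulVec, hse, hse'], by rw [sp_mul_mulVec, hsx, hsx']⟩
  · exact move2a U hx hy h1 he

lemma om_single_inl (x : l ⊕ l → R) (i : l) : om x (Pi.single (Sum.inl i) 1) = x (Sum.inr i) := by
  rw [om_formula, Finset.sum_eq_single i]
  · simp
  · intro j _ hj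
    simp [hj]
  · simp

lemma om_single_inr (x : l ⊕ l → R) (i : l) : om x (Pi.single (Sum.inr i) 1) = - x (Sum.inl i) := by
  rw [om_formula, Finset.sum_eq_single i]
  · simp
  · intro j _ hj
    simp [hj]
  · simp

lemma om_nondeg (x : l ⊕ l → R) (hx : x ≠ 0) : ∃ z, om x z ≠ 0 := by
  obtain ⟨i, hi⟩ := Function.ne_iff.1 hx
  rcases i with i | i
  · exact ⟨Pi.single (Sum.inr i) 1, by rw [om_single_inr]; simpa using hi⟩
  · exact ⟨Pi.single (Sum.inl i) 1, by rw [om_single_inl]; simpa using hi⟩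

/-- vectors supported on coordinates at least `k` -/
def tailSub (F : Type*) [Field F] (g k : ℕ) : Submodule F (Fin g ⊕ Fin g → F) where
  carrier := {x | ∀ i : Fin g, (i : ℕ) < k → x (Sum.inl i) = 0 ∧ x (Sum.inr i) = 0}
  add_mem' := by
    intro a b ha hb i hi
    simp [(ha i hi).1, (ha i hi).2, (hb i hi).1, (hb i hi).2]
  zero_mem' := by intro i _; simp
  smul_mem' := by
    intro c a ha i hi
    simp [(ha i hi).1, (ha i hi).2]

lemma tailSub_single (g k : ℕ) (i : Fin g) (hi : k ≤ (i : ℕ)) :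
    (Pi.single (Sum.inl i) 1 : Fin g ⊕ Fin g → F) ∈ tailSub F g k ∧
    (Pi.single (Sum.inr i) 1 : Fin g ⊕ Fin g → F) ∈ tailSub F g k := by
  constructor <;> intro j hj <;>
  · have : j ≠ i := by rintro rfl; omega
    simp [this]

lemma tailSub_nondeg (g k : ℕ) : ∀ x ∈ tailSub F g k, x ≠ 0 → ∃ z ∈ tailSub F g k, om x z ≠ 0 := by
  intro x hx hx0
  obtain ⟨i, hi⟩ := Function.ne_iff.1 hx0
  rcases i with i | i
  · have hik : k ≤ (i : ℕ) := by
      by_contra h; exact hi (hx i (by omega)).1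
    exact ⟨_, (tailSub_single g k i hik).2, by rw [om_single_inr]; simpa using hi⟩
  · have hik : k ≤ (i : ℕ) := by
      by_contra h; exact hi (hx i (by omega)).2
    exact ⟨_, (tailSub_single g k i hik).1, by rw [om_single_inl]; simpa using hi⟩

lemma tvGrp_mono {U V : Submodule R (l ⊕ l → R)} (h : U ≤ V) : tvGrp U ≤ tvGrp V := by
  apply Subgroup.closure_mono
  rintro _ ⟨v, hv, a, rfl⟩
  exact ⟨v, h hv, a, rfl⟩

lemma sp_gen_aux (g : ℕ) (d : ℕ) : ∀ k, k + d = g → ∀ h : symplecticGroup (Fin g) F,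
    (∀ i : Fin g, (i : ℕ) < k → h.1 *ᵥ (Pi.single (Sum.inl i) 1) = Pi.single (Sum.inl i) 1 ∧
      h.1 *ᵥ (Pi.single (Sum.inr i) 1) = Pi.single (Sum.inr i) 1) → h ∈ tvGrp (⊤ : Submodule F _) := by
  induction d with
  | zero =>
    intro k hk h hh
    have : h = 1 := by
      apply Subtype.ext
      apply Matrix.ext_of_mulVec_single
      intro i
      change _ = (1 : Matrix _ _ F) *ᵥ _
      rw [Matrix.one_mulVec]
      rcases i with i | i
      · exact (hh i (by omega)).1
      · exact (hh i (by omega)).2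
    rw [this]; exact one_mem _
  | succ d ih =>
    intro k hk h hh
    let q : Fin g := ⟨k, by omega⟩
    have hin : ∀ x, x ∈ tailSub F g k → h.1 *ᵥ x ∈ tailSub F g k := by
      intro x hx i hi
      obtain ⟨h1, h2⟩ := hh i hi
      obtain ⟨h3, h4⟩ := hx i hi
      constructor
      · have := sp_om h x (Pi.single (Sum.inr i) 1)
        rw [h2, om_single_inr, om_single_inr, h3] at this
        simpa using this
      · have := sp_om h x (Pi.single (Sum.inl i) 1)
        rw [h1, om_single_inl, om_single_inl, h4] at this
        simpa using this
    have hfix : ∀ s ∈ tvGrp (tailSub F g k), ∀ i : Fin g, (i : ℕ) < k →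
        s.1 *ᵥ (Pi.single (Sum.inl i) 1) = Pi.single (Sum.inl i) 1 ∧
        s.1 *ᵥ (Pi.single (Sum.inr i) 1) = Pi.single (Sum.inr i) 1 := by
      intro s hs i hi
      constructor <;> refine tvGrp_fix (tailSub F g k) _ (fun u hu => ?_) s hs
      · rw [om_swap, om_single_inl, (hu i hi).2, neg_zero]
      · rw [om_swap, om_single_inr, (hu i hi).1, neg_zero, neg_zero]
    obtain ⟨he, hf⟩ := tailSub_single (F := F) g k q le_rfl
    have hne : (Pi.single (Sum.inl q) 1 : Fin g ⊕ Fin g → F) ≠ 0 := by simp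
    have hne' : h.1 *ᵥ (Pi.single (Sum.inl q) 1 : Fin g ⊕ Fin g → F) ≠ 0 := by
      intro h0
      have := sp_om h (Pi.single (Sum.inl q) 1) (Pi.single (Sum.inr q) 1)
      rw [h0, om_single_inr] at this
      simp at this
    obtain ⟨s1, hs1, hs1e⟩ := move_any (tailSub F g k) (tailSub_nondeg g k) (hin _ he) he hne' hne
    have hin2 : ∀ x, x ∈ tailSub F g k → s1.1 *ᵥ x ∈ tailSub F g k := by
      intro x hx i hi
      obtain ⟨h1, h2⟩ := hfix s1 hs1 i hi
      obtain ⟨h3, h4⟩ := hx i hi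
      constructor
      · have := sp_om s1 x (Pi.single (Sum.inr i) 1)
        rw [h2, om_single_inr, om_single_inr, h3] at this
        simpa using this
      · have := sp_om s1 x (Pi.single (Sum.inl i) 1)
        rw [h1, om_single_inl, om_single_inl, h4] at this
        simpa using this
    have hom : om (Pi.single (Sum.inl q) 1 : Fin g ⊕ Fin g → F)
        (s1.1 *ᵥ (h.1 *ᵥ Pi.single (Sum.inr q) 1)) =
        om (Pi.single (Sum.inl q) 1) (Pi.single (Sum.inr q) 1) := by
      conv_lhs => rw [← hs1e]
      rw [sp_om, sp_om]
    obtain ⟨s2, hs2, hs2e, hs2f⟩ := move2 (tailSub F g k) he (hin2 _ (hin _ hf)) hf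
      (by rw [hom, om_single_inr]; simp) hom
    have hmem : s2 * s1 * h ∈ tvGrp (⊤ : Submodule F _) := by
      apply ih (k+1) (by omega)
      intro i hi
      rw [sp_mul_mulVec, sp_mul_mulVec, sp_mul_mulVec, sp_mul_mulVec]
      by_cases hik : (i : ℕ) < k
      · rw [(hh i hik).1, (hh i hik).2, (hfix s1 hs1 i hik).1, (hfix s1 hs1 i hik).2,
          (hfix s2 hs2 i hik).1, (hfix s2 hs2 i hik).2]
        exact ⟨rfl, rfl⟩
      · have : i = q := by apply Fin.ext; change (i : ℕ) = k; omega
        subst this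
        exact ⟨by rw [hs1e, hs2e], hs2f⟩
    have hs : s2 * s1 ∈ tvGrp (⊤ : Submodule F _) :=
      tvGrp_mono le_top (mul_mem hs2 hs1)
    exact (Subgroup.mul_mem_cancel_left _ hs).1 hmem

lemma sp_gen (g : ℕ) : tvGrp (⊤ : Submodule F (Fin g ⊕ Fin g → F)) = ⊤ := by
  rw [eq_top_iff]
  intro h _
  exact sp_gen_aux g g 0 (by omega) h (fun i hi => absurd hi (by omega))

lemma sp_perfect (g : ℕ) (h2 : (2 : F) ≠ 0) (h3 : (3 : F) ≠ 0) :
    commutator (symplecticGroup (Fin g) F) = ⊤ := by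
  rw [eq_top_iff, ← sp_gen, tvGrp, Subgroup.closure_le]
  rintro _ ⟨v, -, a, rfl⟩
  by_cases hv : v = 0
  · rw [hv, tv_zero_left]; exact one_mem _
  obtain ⟨s, -, hs⟩ := move_any (⊤ : Submodule F (Fin g ⊕ Fin g → F))
    (fun x _ hx => by obtain ⟨z, hz⟩ := om_nondeg x hx; exact ⟨z, trivial, hz⟩)
    (x := v) (y := (2:F) • v) trivial trivial hv (smul_ne_zero h2 hv)
  have : tv v a = s * tv v (a / 3) * s⁻¹ * (tv v (a / 3))⁻¹ := by
    rw [tv_conj, hs, tv_smul, eq_mul_inv_iff_mul_eq, tv_add]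
    congr 1
    field_simp
    ring
  rw [this]
  exact Subgroup.commutator_mem_commutator (Subgroup.mem_top _) (Subgroup.mem_top _)

/-- functoriality of the symplectic group -/
def spMap {S : Type*} [CommRing S] (f : R →+* S) : symplecticGroup l R →* symplecticGroup l S where
  toFun M := ⟨M.1.map f, SymplecticGroup.map_mem M.2 f⟩
  map_one' := by apply Subtype.ext; exact Matrix.map_one f (map_zero f) (map_one f)
  map_mul' M N := by apply Subtype.ext; exact Matrix.map_mul

lemma spMap_tv {S : Type*} [CommRing S] (f : R →+* S) (v : l ⊕ l → R) (a : R) :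
    spMap f (tv v a) = tv (f ∘ v) (f a) := by
  apply Subtype.ext
  change (tvMat v a).map f = tvMat (f ∘ v) (f a)
  have hJ : f ∘ (J l R *ᵥ v) = J l S *ᵥ (f ∘ v) := by
    ext i
    simp only [Function.comp]
    rw [RingHom.map_mulVec, ← Matrix.map_J l f]
  ext i j
  have := congrFun hJ j
  simp only [Function.comp] at this
  simp only [tvMat, Matrix.map_apply, Matrix.add_apply, Matrix.smul_apply, vecMulVec_apply,
    map_add, smul_eq_mul, map_mul, Function.comp, this]
  congr 1
  by_cases h : i = j <;> simp [Matrix.one_apply, h]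

/-- reduction modulo several primes -/
def redHom (g : ℕ) {ι : Type*} (p : ι → ℕ) :
    symplecticGroup (Fin g) ℤ →* ∀ i, symplecticGroup (Fin g) (ZMod (p i)) :=
  MonoidHom.mk' (fun M i => spMap (Int.castRingHom (ZMod (p i))) M) (by
    intro a b; funext i; exact map_mul _ _ _)

lemma redHom_surj (g : ℕ) {ι : Type*} [Fintype ι] [DecidableEq ι] (p : ι → ℕ)
    (hp : ∀ i, (p i).Prime) (hinj : Function.Injective p) :
    (redHom g p).range = ⊤ := by
  have hfact : ∀ i, Fact (p i).Prime := fun i => ⟨hp i⟩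
  have hpi : Subgroup.pi Set.univ (fun i => (⊤ : Subgroup (symplecticGroup (Fin g) (ZMod (p i))))) ≤
      (redHom g p).range := by
    rw [Subgroup.pi_le_iff]
    intro i
    rw [Subgroup.map_le_iff_le_comap, ← sp_gen, tvGrp, Subgroup.closure_le]
    rintro _ ⟨v, -, a, rfl⟩
    have hP : ((∏ j ∈ Finset.univ.erase i, p j : ℕ) : ZMod (p i)) ≠ 0 := by
      rw [Ne, ZMod.natCast_eq_zero_iff, (hp i).prime.dvd_finsetProd_iff]
      rintro ⟨j, hj, hd⟩
      rw [Nat.prime_dvd_prime_iff_eq (hp i) (hp j)] at hd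
      exact (Finset.ne_of_mem_erase hj) (hinj hd).symm
    set Q : ℕ := ∏ j ∈ Finset.univ.erase i, p j with hQ
    obtain ⟨b, hb⟩ := ZMod.intCast_surjective (a / (Q : ZMod (p i)))
    choose v' hv' using fun q => ZMod.intCast_surjective (v q)
    refine ⟨tv v' (b * Q), ?_⟩
    funext j
    change spMap (Int.castRingHom (ZMod (p j))) _ = _
    rw [spMap_tv]
    by_cases hij : j = i
    · subst hij
      simp only [MonoidHom.mulSingle_apply, Pi.mulSingle_eq_same]
      congr 1
      · ext q; exact hv' q
      · simp only [map_mul, eq_intCast, hb, Int.cast_natCast]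
        field_simp
    · simp only [MonoidHom.mulSingle_apply, Pi.mulSingle_eq_of_ne hij]
      have : ((b * Q : ℤ) : ZMod (p j)) = 0 := by
        have : ((Q : ℕ) : ZMod (p j)) = 0 := by
          rw [ZMod.natCast_eq_zero_iff]
          exact Finset.dvd_prod_of_mem _ (Finset.mem_erase.2 ⟨hij, Finset.mem_univ _⟩)
        push_cast
        rw [this, mul_zero]
      rw [eq_intCast, this, tv_zero]
  rw [eq_top_iff]
  refine le_trans ?_ hpi
  intro x _ i _
  trivial

lemma pi_perfect {ι : Type*} [Finite ι] {Gs : ι → Type*} [∀ i, Group (Gs i)]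
    (h : ∀ i, commutator (Gs i) = ⊤) : commutator (∀ i, Gs i) = ⊤ := by
  have := Subgroup.commutator_pi_pi_of_finite (fun i => (⊤ : Subgroup (Gs i))) (fun i => ⊤)
  rw [Subgroup.pi_top] at this
  rw [commutator_def, this]
  have h' : (fun i => ⁅(⊤ : Subgroup (Gs i)), ⊤⁆) = fun i => (⊤ : Subgroup (Gs i)) := by
    funext i; rw [← commutator_def]; exact h i
  rw [h', Subgroup.pi_top]

end SpPart
section SympBasis
open Matrix

variable {F V : Type*} [Field F] [AddCommGroup V] [Module F V]

lemma gram_sum {l : Type*} [Fintype l] [DecidableEq l] (B : V →ₗ[F] V →ₗ[F] F)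
    (f : l ⊕ l → V) (hf : ∀ i j, B (f i) (f j) = J l F i j) (c d : l ⊕ l → F) :
    B (∑ i, c i • f i) (∑ i, d i • f i) = om c d := by
  rw [om_eq]
  simp only [map_sum, LinearMap.sum_apply, map_smul, LinearMap.smul_apply, smul_eq_mul, hf,
    dotProduct, mulVec, Finset.mul_sum]
  rw [Finset.sum_comm]
  refine Finset.sum_congr rfl fun i _ => Finset.sum_congr rfl fun j _ => ?_
  ring

lemma gram_indep {l : Type*} [Fintype l] [DecidableEq l] (B : V →ₗ[F] V →ₗ[F] F)
    (f : l ⊕ l → V) (hf : ∀ i j, B (f i) (f j) = J l F i j) : LinearIndependent F f := by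
  rw [Fintype.linearIndependent_iff]
  intro c hc
  by_contra hne
  have hc0 : c ≠ 0 := by
    rintro rfl; exact hne (fun i => rfl)
  obtain ⟨d, hd⟩ := om_nondeg c hc0
  apply hd
  rw [← gram_sum B f hf, hc]; simp

lemma gram_proj {l : Type*} [Fintype l] [DecidableEq l] (B : V →ₗ[F] V →ₗ[F] F)
    (f : l ⊕ l → V) (hf : ∀ i j, B (f i) (f j) = J l F i j) (v : V) :
    ∃ w ∈ Submodule.span F (Set.range f), ∀ j, B (v - w) (f j) = 0 := by
  let c : l ⊕ l → F := Sum.elim (fun i => - B v (f (Sum.inr i))) (fun i => B v (f (Sum.inl i)))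
  refine ⟨∑ i, c i • f i, ?_, ?_⟩
  · exact Submodule.sum_mem _ fun i _ => Submodule.smul_mem _ _ (Submodule.subset_span ⟨i, rfl⟩)
  · intro j
    have h1 : f j = ∑ i, (Pi.single j 1 : l ⊕ l → F) i • f i := by
      simp [Pi.single_apply]
    have h2 : B (∑ i, c i • f i) (f j) = om c (Pi.single j 1) := by
      conv_lhs => rw [h1]
      exact gram_sum B f hf _ _
    rw [map_sub, LinearMap.sub_apply, h2]
    rcases j with j | j
    · rw [om_single_inl]; simp [c]
    · rw [om_single_inr]; simp [c]

lemma symp_family [FiniteDimensional F V] (B : V →ₗ[F] V →ₗ[F] F) (halt : ∀ x, B x x = 0)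
    (hnd : ∀ x, x ≠ 0 → ∃ y, B x y ≠ 0) (n : ℕ) (hn : 2 * n ≤ Module.finrank F V) :
    ∃ f : Fin n ⊕ Fin n → V, ∀ i j, B (f i) (f j) = J (Fin n) F i j := by
  have hskew : ∀ x y, B x y = - B y x := by
    intro x y
    have := halt (x + y)
    simp only [map_add, LinearMap.add_apply, halt] at this
    linear_combination this
  induction n with
  | zero => exact ⟨fun i => 0, fun i => by rcases i with i | i <;> exact i.elim0⟩
  | succ n ih =>
    obtain ⟨f, hf⟩ := ih (by omega)
    have hspan : ∃ v, v ∉ Submodule.span F (Set.range f) := by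
      by_contra hcon
      push Not at hcon
      have htop : Submodule.span F (Set.range f) = ⊤ := eq_top_iff.2 fun x _ => hcon x
      have h1 := finrank_span_eq_card (gram_indep B f hf)
      rw [htop, finrank_top] at h1
      simp at h1
      omega
    obtain ⟨v, hv⟩ := hspan
    obtain ⟨w, hw, hvw⟩ := gram_proj B f hf v
    have hv0 : v - w ≠ 0 := by
      intro h; apply hv; rw [sub_eq_zero.1 h]; exact hw
    obtain ⟨u, hu⟩ := hnd _ hv0
    obtain ⟨w', hw', huw⟩ := gram_proj B f hf u
    have hspan0 : B (v - w) w' = 0 := by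
      have : Submodule.span F (Set.range f) ≤ LinearMap.ker (B (v - w)) := by
        rw [Submodule.span_le]; rintro _ ⟨j, rfl⟩; exact hvw j
      exact this hw'
    set e := v - w with he
    set k := B e u with hk
    set e' := k⁻¹ • (u - w') with he'
    have h1 : B e e' = 1 := by
      rw [he', map_smul, map_sub, hspan0, sub_zero, ← hk, smul_eq_mul, inv_mul_cancel₀ hu]
    have h2 : B e' e = -1 := by rw [hskew, h1]
    have h3 : ∀ j, B e' (f j) = 0 := by
      intro j; rw [he', map_smul, LinearMap.smul_apply, huw j, smul_zero]
    have h4 : ∀ j, B (f j) e = 0 := by intro j; rw [hskew, hvw j, neg_zero]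
    have h5 : ∀ j, B (f j) e' = 0 := by intro j; rw [hskew, h3 j, neg_zero]
    refine ⟨Sum.elim (Fin.cons e' (fun i => f (Sum.inl i))) (Fin.cons e (fun i => f (Sum.inr i))), ?_⟩
    rintro (i | i) (j | j) <;> refine Fin.cases ?_ (fun i => ?_) i <;>
      refine Fin.cases ?_ (fun j => ?_) j <;>
      simp [halt, h1, h2, h3, h4, h5, hvw, hf, J, Matrix.one_apply, Fin.succ_ne_zero, (Fin.succ_ne_zero _).symm]

lemma symp_basis [FiniteDimensional F V] (B : V →ₗ[F] V →ₗ[F] F) (halt : ∀ x, B x x = 0)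
    (hnd : ∀ x, x ≠ 0 → ∃ y, B x y ≠ 0) (g : ℕ) (hg : 1 ≤ g) (hn : Module.finrank F V = 2 * g) :
    ∃ b : Module.Basis (Fin g ⊕ Fin g) F V, ∀ x y, B x y = om (b.repr x) (b.repr y) := by
  obtain ⟨f, hf⟩ := symp_family B halt hnd g hn.ge
  have : Nonempty (Fin g ⊕ Fin g) := ⟨Sum.inl ⟨0, hg⟩⟩
  let b := basisOfLinearIndependentOfCardEqFinrank (gram_indep B f hf) (by simp; omega)
  have hb : ∀ i, b i = f i := fun i => by simp [b]
  refine ⟨b, fun x y => ?_⟩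
  rw [← gram_sum B f hf]
  simp_rw [← hb]
  rw [b.sum_repr, b.sum_repr]

end SympBasis

section Count
open Matrix Polynomial

lemma exists_form (p g : ℕ) [hp : Fact p.Prime] (hp7 : 7 ≤ p) (hg : 1 ≤ g)
    (K : Type*) [Field K] [Fintype K] [Algebra (ZMod p) K]
    (hK : Module.finrank (ZMod p) K = 2 * g) :
    ∃ B : K →ₗ[ZMod p] K →ₗ[ZMod p] (ZMod p), (∀ x, B x x = 0) ∧ (∀ x, x ≠ 0 → ∃ y, B x y ≠ 0) ∧
      ∀ y, (∀ z w, B (y * z) (y * w) = B z w) ↔ y ^ (p ^ g + 1) = 1 := by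
  classical
  have hcard : Fintype.card K = p ^ (2 * g) := by
    rw [Module.card_eq_pow_finrank (K := ZMod p), ZMod.card, hK]
  let σ : K ≃ₐ[ZMod p] K := (FiniteField.frobeniusAlgEquivOfAlgebraic (ZMod p) K) ^ g
  have hσ : ∀ x, σ x = x ^ (p ^ g) := by
    intro x
    simp only [σ, AlgEquiv.coe_pow]
    rw [FiniteField.coe_frobeniusAlgEquivOfAlgebraic_iterate, ZMod.card]
  have hσσ : ∀ x, σ (σ x) = x := by
    intro x
    rw [hσ, hσ, ← pow_mul, ← pow_add, ← two_mul, ← hcard, FiniteField.pow_card]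
  have h1p : 1 < p ^ g := Nat.one_lt_pow (by omega) (by omega)
  have hy : ∃ y, σ y ≠ y := by
    by_contra hcon
    push Not at hcon
    have hne : (X ^ (p ^ g) - X : K[X]) ≠ 0 := FiniteField.X_pow_card_sub_X_ne_zero K h1p
    have hle : (Finset.univ : Finset K).card ≤ (X ^ (p ^ g) - X : K[X]).natDegree := by
      apply Polynomial.card_le_degree_of_subset_roots
      intro x _
      rw [Polynomial.mem_roots hne, IsRoot.def]
      simp [← hσ, hcon x]
    rw [FiniteField.X_pow_card_sub_X_natDegree_eq K h1p, Finset.card_univ, hcard, two_mul,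
      pow_add] at hle
    nlinarith
  obtain ⟨y0, hy0⟩ := hy
  set δ := y0 - σ y0 with hδ
  have hδ0 : δ ≠ 0 := sub_ne_zero.2 hy0.symm
  have hσδ : σ δ = - δ := by rw [hδ, map_sub, hσσ]; ring
  let tr := Algebra.trace (ZMod p) K
  have htr : ∀ x, tr (σ x) = tr x := fun x => Algebra.trace_eq_of_algEquiv σ x
  have hnd : ∀ x : K, (∀ z, tr (x * z) = 0) → x = 0 := by
    intro x hx
    exact (traceForm_nondegenerate (ZMod p) K).1 x (fun z => by
      rw [Algebra.traceForm_apply]; exact hx z)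
  let B : K →ₗ[ZMod p] K →ₗ[ZMod p] (ZMod p) :=
    LinearMap.mk₂ (ZMod p) (fun x y => tr (δ * x * σ y))
      (by intro a b c; rw [← map_add]; congr 1; ring)
      (by intro a b c; rw [← map_smul]; congr 1; simp [mul_assoc])
      (by intro a b c; rw [← map_add, map_add σ]; congr 1; ring)
      (by intro a b c; rw [← map_smul, map_smul σ]; congr 1; simp)
  have hB : ∀ x y, B x y = tr (δ * x * σ y) := fun x y => rfl
  have h2 : (2 : ZMod p) ≠ 0 := by
    have : ((2 : ℕ) : ZMod p) ≠ 0 := by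
      rw [Ne, ZMod.natCast_eq_zero_iff]
      intro h; have := Nat.le_of_dvd (by norm_num) h; omega
    exact_mod_cast this
  refine ⟨B, ?_, ?_, ?_⟩
  · intro x
    have : B x x = - B x x := by
      conv_lhs => rw [hB, ← htr, map_mul σ, map_mul σ, hσδ, hσσ]
      rw [hB, ← map_neg]; congr 1; ring
    have h3 : 2 * B x x = 0 := by linear_combination this
    exact (mul_eq_zero.1 h3).resolve_left h2
  · intro x hx
    by_contra hcon
    push Not at hcon
    have : δ * x = 0 := hnd _ (fun z => by
      have := hcon (σ z)
      rwa [hB, hσσ] at this)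
    exact (mul_ne_zero hδ0 hx) this
  · intro y
    have hyy : y ^ (p ^ g + 1) = y * σ y := by rw [hσ, pow_succ]; ring
    rw [hyy]
    constructor
    · intro h
      have h3 : δ * (y * σ y - 1) = 0 := hnd _ (fun z => by
        have := h z 1
        rw [hB, hB, ← sub_eq_zero, ← map_sub] at this
        rw [← this]; congr 1
        rw [mul_one, map_one]; ring)
      exact sub_eq_zero.1 ((mul_eq_zero.1 h3).resolve_left hδ0)
    · intro h z w
      rw [hB, hB, map_mul σ]; congr 1
      linear_combination (δ * z * σ w) * h

lemma torus_count (p g : ℕ) [hp : Fact p.Prime] (hp7 : 7 ≤ p) (hg : 1 ≤ g)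
    (K : Type*) [Field K] [Fintype K] [Algebra (ZMod p) K]
    (hK : Module.finrank (ZMod p) K = 2 * g) :
    ∃ T Treg : Finset K, (∀ x, x ∈ T ↔ x ^ (p ^ g + 1) = 1) ∧ Treg ⊆ T ∧
      (∀ x ∈ Treg, Algebra.adjoin (ZMod p) {x} = ⊤ ∧
        (minpoly (ZMod p) x).natDegree = 2 * g) ∧ 0 < T.card ∧ T.card ≤ 2 * Treg.card := by
  classical
  have hcard : Fintype.card K = p ^ (2 * g) := by
    rw [Module.card_eq_pow_finrank (K := ZMod p), ZMod.card, hK]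
  let T : Finset K := Polynomial.nthRootsFinset (p ^ g + 1) 1
  have hT : ∀ x, x ∈ T ↔ x ^ (p ^ g + 1) = 1 := fun x => Polynomial.mem_nthRootsFinset (by omega) 1
  have h1p : 1 < p ^ g := Nat.one_lt_pow (by omega) (by omega)
  have hTcard : T.card = p ^ g + 1 := by
    obtain ⟨z, hz⟩ := IsCyclic.exists_ofOrder_eq_natCard (α := Kˣ)
    have hprim : IsPrimitiveRoot (z : K) (Nat.card Kˣ) := by
      rw [← hz, IsPrimitiveRoot.coe_units_iff]
      exact IsPrimitiveRoot.orderOf z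
    have hc : Nat.card Kˣ = (p ^ g - 1) * (p ^ g + 1) := by
      rw [Nat.card_units, Nat.card_eq_fintype_card, hcard, two_mul, pow_add]
      obtain ⟨r, hr⟩ : ∃ r, p ^ g = r + 1 := ⟨p ^ g - 1, by omega⟩
      rw [hr]
      simp only [Nat.add_sub_cancel]
      rw [Nat.sub_eq_iff_eq_add (by nlinarith)]
      ring
    exact (hprim.pow Nat.card_pos hc).card_nthRootsFinset
  let Treg := T.filter (fun x => Algebra.adjoin (ZMod p) {x} = ⊤)
  have hbad : T.filter (fun x => ¬ Algebra.adjoin (ZMod p) {x} = ⊤) ⊆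
      Polynomial.nthRootsFinset 2 (1 : K) ∪
        (Finset.Ico 1 g).biUnion (fun d => (X ^ (p ^ d) - X : K[X]).roots.toFinset) := by
    intro x hx
    rw [Finset.mem_filter, hT] at hx
    obtain ⟨hx1, hx2⟩ := hx
    have halg : IsAlgebraic (ZMod p) x := Algebra.IsAlgebraic.isAlgebraic x
    let L := IntermediateField.adjoin (ZMod p) {x}
    have hLtop : L ≠ ⊤ := by
      intro h; exact hx2 ((IntermediateField.adjoin_eq_top_iff).1 h)
    set d := Module.finrank (ZMod p) L with hd
    have hdpos : 0 < d := Module.finrank_pos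
    have hxd : x ^ (p ^ d) = x := by
      have hxL : x ∈ L := IntermediateField.mem_adjoin_simple_self _ x
      have h1 := FiniteField.pow_card (⟨x, hxL⟩ : L)
      have h2 : Fintype.card L = p ^ d := by
        rw [Module.card_eq_pow_finrank (K := ZMod p), ZMod.card]
      rw [h2] at h1
      exact congrArg Subtype.val h1
    have hmul : d * Module.finrank L K = 2 * g := by
      rw [← hK]; exact Module.finrank_mul_finrank (ZMod p) L K
    have hne1 : Module.finrank L K ≠ 1 := by
      intro h
      apply hLtop
      exact IntermediateField.finrank_eq_one_iff_eq_top.1 h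
    have hpos : 0 < Module.finrank L K := Module.finrank_pos
    have hdg : d ≤ g := by
      have : 2 ≤ Module.finrank L K := by omega
      nlinarith
    rw [Finset.mem_union]
    rcases hdg.eq_or_lt with h | h
    · left
      rw [Polynomial.mem_nthRootsFinset (by norm_num)]
      rw [h] at hxd
      rw [pow_succ, hxd] at hx1
      rw [pow_two]; exact hx1
    · right
      rw [Finset.mem_biUnion]
      refine ⟨d, Finset.mem_Ico.2 ⟨hdpos, h⟩, ?_⟩
      have h1d : 1 < p ^ d := Nat.one_lt_pow (by omega) (by omega)
      rw [Multiset.mem_toFinset, Polynomial.mem_roots (FiniteField.X_pow_card_sub_X_ne_zero K h1d),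
        IsRoot.def]
      simp [hxd]
  have hbadcard : (T.filter (fun x => ¬ Algebra.adjoin (ZMod p) {x} = ⊤)).card ≤
      2 + ∑ d ∈ Finset.Ico 1 g, p ^ d := by
    refine (Finset.card_le_card hbad).trans ((Finset.card_union_le _ _).trans ?_)
    gcongr
    · unfold Polynomial.nthRootsFinset
      refine (Multiset.toFinset_card_le _).trans ?_
      exact Polynomial.card_nthRoots 2 1
    · refine Finset.card_biUnion_le.trans (Finset.sum_le_sum fun d hd => ?_)
      have hd1 := (Finset.mem_Ico.1 hd).1
      have h1d : 1 < p ^ d := Nat.one_lt_pow (by omega) (by omega)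
      refine (Multiset.toFinset_card_le _).trans ((Polynomial.card_roots' _).trans ?_)
      rw [FiniteField.X_pow_card_sub_X_natDegree_eq K h1d]
  have hgeom : ∀ m, 6 * ∑ d ∈ Finset.range m, p ^ d + 1 ≤ p ^ m := by
    intro m
    induction m with
    | zero => simp
    | succ m ih =>
      rw [Finset.sum_range_succ, pow_succ]
      nlinarith [Nat.zero_le (p ^ m)]
  have hsum : ∑ d ∈ Finset.Ico 1 g, p ^ d ≤ ∑ d ∈ Finset.range g, p ^ d := by
    apply Finset.sum_le_sum_of_subset
    intro d hd; rw [Finset.mem_Ico] at hd; rw [Finset.mem_range]; exact hd.2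
  have hsplit : Treg.card + (T.filter (fun x => ¬ Algebra.adjoin (ZMod p) {x} = ⊤)).card = T.card :=
    Finset.card_filter_add_card_filter_not _
  have hgg := hgeom g
  have h7 : 7 ≤ p ^ g := hp7.trans (Nat.le_self_pow (by omega) p)
  refine ⟨T, Treg, hT, Finset.filter_subset _ _, ?_, by omega, by omega⟩
  intro x hx
  have hx2 := (Finset.mem_filter.1 hx).2
  refine ⟨hx2, ?_⟩
  rw [← hK]
  exact (Field.primitive_element_iff_minpoly_natDegree_eq (ZMod p) x).1
    ((IntermediateField.adjoin_eq_top_iff).2 hx2)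

end Count
section IrrCount
open Matrix Polynomial

lemma charpoly_leftMul {F K m : Type*} [Field F] [Field K] [Algebra F K] [Fintype m] [DecidableEq m]
    (b : Module.Basis m F K) (x : K) (hx : (minpoly F x).natDegree = Fintype.card m) :
    (Algebra.leftMulMatrix b x).charpoly = minpoly F x := by
  have : FiniteDimensional F K := b.finiteDimensional_of_finite
  have hxint : IsIntegral F x := IsIntegral.of_finite F x
  have h0 : aeval x (Algebra.leftMulMatrix b x).charpoly = 0 := by
    apply Algebra.leftMulMatrix_injective b
    rw [← Polynomial.aeval_algHom_apply, Matrix.aeval_self_charpoly, map_zero]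
  refine (Polynomial.eq_of_monic_of_dvd_of_natDegree_le (minpoly.monic hxint)
    (Matrix.charpoly_monic _) (minpoly.dvd F x h0) ?_)
  rw [Matrix.charpoly_natDegree_eq_dim, hx]

lemma conj_aux {G : Type*} [Group G] {h h0 a : G} (he : h * a * h⁻¹ = h0 * a * h0⁻¹) :
    (h0⁻¹ * h) * a = a * (h0⁻¹ * h) := by
  calc (h0⁻¹ * h) * a = h0⁻¹ * (h * a * h⁻¹) * h := by group
    _ = a * (h0⁻¹ * h) := by rw [he]; group

lemma irr_count (p g : ℕ) [hp : Fact p.Prime] (hp7 : 7 ≤ p) (hg : 1 ≤ g)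
    (Good : Finset (symplecticGroup (Fin g) (ZMod p)))
    (hGood : ∀ M, M ∈ Good ↔ Irreducible M.1.charpoly)
    [Fintype (symplecticGroup (Fin g) (ZMod p))] :
    Fintype.card (symplecticGroup (Fin g) (ZMod p)) ≤ 4 * g * Good.card := by
  classical
  let K := GaloisField p (2 * g)
  have : Fintype K := Fintype.ofFinite K
  have hK : Module.finrank (ZMod p) K = 2 * g := GaloisField.finrank p (by omega)
  have : FiniteDimensional (ZMod p) K := Module.finite_of_finrank_pos (by omega)
  obtain ⟨B, halt, hnd, hB⟩ := exists_form p g hp7 hg K hK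
  obtain ⟨T, Treg, hT, hsub, hreg, hT0, hTc⟩ := torus_count p g hp7 hg K hK
  obtain ⟨b, hb⟩ := symp_basis B halt hnd g hg hK
  let G := symplecticGroup (Fin g) (ZMod p)
  let L := Algebra.leftMulMatrix b
  have hL : ∀ x z, L x *ᵥ b.repr z = b.repr (x * z) := fun x z =>
    Algebra.leftMulMatrix_mulVec_repr b x z
  have hsurj : ∀ c : Fin g ⊕ Fin g → ZMod p, ∃ z, (b.repr z : Fin g ⊕ Fin g → ZMod p) = c :=
    fun c => ⟨b.equivFun.symm c, by
      rw [← b.equivFun_apply]; exact b.equivFun.apply_symm_apply c⟩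
  have hmem : ∀ x, L x ∈ symplecticGroup (Fin g) (ZMod p) ↔ x ∈ T := by
    intro x
    rw [mem_sp_iff, hT, ← hB]
    constructor
    · intro h z w
      rw [hb, hb, ← hL, ← hL, h]
    · intro h c d
      obtain ⟨z, rfl⟩ := hsurj c
      obtain ⟨w, rfl⟩ := hsurj d
      rw [hL, hL, ← hb, ← hb, h]
  let io : K → G := fun x => if h : x ∈ T then ⟨L x, (hmem x).2 h⟩ else 1
  have hio : ∀ x ∈ T, (io x).1 = L x := by
    intro x hx
    simp only [io, dif_pos hx]
  let Φ : G × K → G := fun q => q.1 * io q.2 * q.1⁻¹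
  have hconj : ∀ (h : G) (x : K), x ∈ T → (Φ (h, x)).1.charpoly = (L x).charpoly := by
    intro h x hx
    let u : (Matrix (Fin g ⊕ Fin g) (Fin g ⊕ Fin g) (ZMod p))ˣ :=
      ⟨h.1, (h⁻¹ : G).1, by
        have := congrArg Subtype.val (mul_inv_cancel h); exact this, by
        have := congrArg Subtype.val (inv_mul_cancel h); exact this⟩
    have := Matrix.charpoly_units_conj u (L x)
    rw [← this, ← hio x hx, ← Matrix.coe_units_inv]
    rfl
  have hcp : ∀ x ∈ Treg, (L x).charpoly = minpoly (ZMod p) x := fun x hx =>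
    charpoly_leftMul b x (by rw [(hreg x hx).2]; simp; omega)
  let S : Finset (G × K) := Finset.univ ×ˢ Treg
  have himg : S.image Φ ⊆ Good := by
    intro r hr
    obtain ⟨⟨h, x⟩, hq, rfl⟩ := Finset.mem_image.1 hr
    have hx : x ∈ Treg := (Finset.mem_product.1 hq).2
    rw [hGood, hconj h x (hsub hx), hcp x hx]
    exact minpoly.irreducible (IsIntegral.of_finite _ x)
  -- commutant
  have hcomm : ∀ x ∈ Treg, ∀ c : G, c * io x = io x * c → ∃ y ∈ T, c = io y := by
    intro x hx c hc
    have hc1 : c.1 * L x = L x * c.1 := by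
      rw [← hio x (hsub hx)]; exact congrArg Subtype.val hc
    have hall : ∀ z, c.1 * L z = L z * c.1 := by
      intro z
      have hz : z ∈ Algebra.adjoin (ZMod p) {x} := by rw [(hreg x hx).1]; trivial
      induction hz using Algebra.adjoin_induction with
      | mem z hz => rw [Set.mem_singleton_iff.1 hz]; exact hc1
      | algebraMap r =>
        rw [AlgHom.commutes]; exact (Algebra.commutes r c.1).symm
      | add u v _ _ hu hv => rw [map_add, mul_add, add_mul, hu, hv]
      | mul u v _ _ hu hv => rw [map_mul, ← mul_assoc, hu, mul_assoc, hv, mul_assoc]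
    obtain ⟨y, hy⟩ := hsurj (c.1 *ᵥ b.repr 1)
    have hcy : c.1 = L y := by
      apply Matrix.ext_of_mulVec_single
      intro i
      obtain ⟨z, hz⟩ := hsurj (Pi.single i 1)
      rw [← hz]
      calc c.1 *ᵥ b.repr z = c.1 *ᵥ (L z *ᵥ b.repr 1) := by rw [hL, mul_one]
        _ = L z *ᵥ (c.1 *ᵥ b.repr 1) := by
            rw [Matrix.mulVec_mulVec, hall, ← Matrix.mulVec_mulVec]
        _ = L y *ᵥ b.repr z := by rw [← hy, hL, hL, mul_comm z y]
    have hyT : y ∈ T := (hmem y).1 (hcy ▸ c.2)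
    exact ⟨y, hyT, Subtype.ext (by rw [hio y hyT, hcy])⟩
  have hfib : ∀ r ∈ S.image Φ, (S.filter fun q => Φ q = r).card ≤ 2 * g * T.card := by
    intro r hr
    have h1 : ((S.filter fun q => Φ q = r).image Prod.snd).card ≤ 2 * g := by
      have hne : (r.1.charpoly.map (algebraMap (ZMod p) K)) ≠ 0 :=
        ((Matrix.charpoly_monic r.1).map _).ne_zero
      have hss : (S.filter fun q => Φ q = r).image Prod.snd ⊆
          (r.1.charpoly.map (algebraMap (ZMod p) K)).roots.toFinset := by
        intro x hx
        obtain ⟨⟨h, x'⟩, hq, rfl⟩ := Finset.mem_image.1 hx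
        obtain ⟨hq1, hq2⟩ := Finset.mem_filter.1 hq
        have hx : x' ∈ Treg := (Finset.mem_product.1 hq1).2
        rw [Multiset.mem_toFinset, Polynomial.mem_roots hne, Polynomial.IsRoot.def,
          Polynomial.eval_map_algebraMap, ← hq2, hconj h x' (hsub hx), hcp x' hx]
        exact minpoly.aeval _ _
      refine (Finset.card_le_card hss).trans ((Multiset.toFinset_card_le _).trans
        ((Polynomial.card_roots' _).trans ?_))
      rw [Polynomial.natDegree_map, Matrix.charpoly_natDegree_eq_dim]
      simp; omega
    have h2 : (S.filter fun q => Φ q = r).card ≤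
        T.card * ((S.filter fun q => Φ q = r).image Prod.snd).card := by
      refine Finset.card_le_mul_card_image _ _ ?_
      intro x hx
      obtain ⟨⟨h0, x'⟩, hq, hx'⟩ := Finset.mem_image.1 hx
      simp only at hx'
      subst hx'
      obtain ⟨hq1, hq2⟩ := Finset.mem_filter.1 hq
      have hxR : x' ∈ Treg := (Finset.mem_product.1 hq1).2
      have hss : ((S.filter fun q => Φ q = r).filter fun q => q.2 = x') ⊆
          T.image fun y => (h0 * io y, x') := by
        rintro ⟨h, x⟩ hq'
        obtain ⟨hq4, hxx⟩ := Finset.mem_filter.1 hq'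
        simp only at hxx
        subst hxx
        obtain ⟨_, hq3⟩ := Finset.mem_filter.1 hq4
        have he : h * io x * h⁻¹ = h0 * io x * h0⁻¹ := hq3.trans hq2.symm
        have hc : (h0⁻¹ * h) * io x = io x * (h0⁻¹ * h) := conj_aux he
        obtain ⟨y, hy, hcy⟩ := hcomm x hxR _ hc
        refine Finset.mem_image.2 ⟨y, hy, ?_⟩
        rw [← hcy]; exact congrArg (fun c => (c, x)) (mul_inv_cancel_left h0 h)
      exact (Finset.card_le_card hss).trans Finset.card_image_le
    calc _ ≤ _ := h2
      _ ≤ T.card * (2 * g) := Nat.mul_le_mul_left _ h1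
      _ = _ := by ring
  have hmain := Finset.card_le_mul_card_image S _ hfib
  have hS : S.card = Fintype.card G * Treg.card := by
    simp only [S, Finset.card_product, Finset.card_univ]
  rw [hS] at hmain
  have hle : (S.image Φ).card ≤ Good.card := Finset.card_le_card himg
  have hR0 : 0 < Treg.card := by omega
  have : Fintype.card G * Treg.card ≤ (4 * g * Good.card) * Treg.card := by
    calc _ ≤ _ := hmain
      _ ≤ 2 * g * T.card * Good.card := Nat.mul_le_mul_left _ hle
      _ ≤ 2 * g * (2 * Treg.card) * Good.card := by gcongr
      _ = _ := by ring
  exact Nat.le_of_mul_le_mul_right this hR0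

end IrrCount
section Final
open Matrix Polynomial

lemma irr_of_mod (g p : ℕ) [hp : Fact p.Prime] (M : symplecticGroup (Fin g) ℤ)
    (h : Irreducible ((spMap (Int.castRingHom (ZMod p)) M).1.charpoly)) :
    Irreducible (M.1.charpoly.map (algebraMap ℤ ℚ)) := by
  have hm : M.1.charpoly.Monic := Matrix.charpoly_monic _
  rw [← hm.irreducible_iff_irreducible_map_fraction_map]
  refine Polynomial.Monic.irreducible_of_irreducible_map (Int.castRingHom (ZMod p)) _ hm ?_
  rw [← Matrix.charpoly_map]
  exact h

lemma exists_primes (k : ℕ) : ∃ p : Fin k → ℕ, Function.Injective p ∧ ∀ i, (p i).Prime ∧ 7 ≤ p i := by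
  have hinf : {q : ℕ | q.Prime ∧ 7 ≤ q}.Infinite := by
    refine Set.infinite_of_not_bddAbove ?_
    rintro ⟨B, hB⟩
    obtain ⟨q, hq, hqp⟩ := Nat.exists_infinite_primes (B + 8)
    have := hB (show q ∈ {q : ℕ | q.Prime ∧ 7 ≤ q} from ⟨hqp, by omega⟩)
    omega
  let f := hinf.natEmbedding
  exact ⟨fun i => (f i : ℕ), fun i j h => Fin.ext (f.injective (Subtype.ext h)), fun i => (f i).2⟩

lemma zmod_ne (p m : ℕ) (hm : 0 < m) (hmp : m < p) : ((m : ℕ) : ZMod p) ≠ 0 := by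
  rw [Ne, ZMod.natCast_eq_zero_iff]
  exact Nat.not_dvd_of_pos_of_lt hm hmp

lemma exists_quot (g : ℕ) (hg : 1 ≤ g) (ε : ℝ) (hε : 0 < ε) :
    ∃ (k : ℕ) (p : Fin k → ℕ) (hp : ∀ i, Fact (p i).Prime), Function.Injective p ∧
      (∀ i, 7 ≤ p i) ∧ ∃ (_ : Fintype (∀ i, symplecticGroup (Fin g) (ZMod (p i))))
        (Bad : Finset (∀ i, symplecticGroup (Fin g) (ZMod (p i)))),
        (∀ x, x ∈ Bad ↔ ∀ i, ¬ Irreducible (x i).1.charpoly) ∧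
        (Bad.card : ℝ) / Fintype.card (∀ i, symplecticGroup (Fin g) (ZMod (p i))) < ε := by
  classical
  have hgR : (1 : ℝ) ≤ g := by exact_mod_cast hg
  have hc : (1 : ℝ) / (4 * g) ≤ 1 := by
    rw [div_le_one (by positivity)]; linarith
  have hc0 : 0 < (1 : ℝ) / (4 * g) := by positivity
  obtain ⟨k, hk⟩ := exists_pow_lt_of_lt_one hε (show 1 - (1 : ℝ) / (4 * g) < 1 by linarith)
  obtain ⟨p, hinj, hp⟩ := exists_primes k
  have hpF : ∀ i, Fact (p i).Prime := fun i => ⟨(hp i).1⟩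
  have hfin : ∀ i, Fintype (symplecticGroup (Fin g) (ZMod (p i))) := fun i => Fintype.ofFinite _
  let bad : ∀ i, Finset (symplecticGroup (Fin g) (ZMod (p i))) := fun i =>
    Finset.univ.filter fun x => ¬ Irreducible x.1.charpoly
  refine ⟨k, p, hpF, hinj, fun i => (hp i).2, inferInstance, Fintype.piFinset bad, ?_, ?_⟩
  · intro x; simp [bad]
  · rw [Fintype.card_piFinset, Fintype.card_pi, Nat.cast_prod, Nat.cast_prod, ← Finset.prod_div_distrib]
    refine lt_of_le_of_lt ?_ hk
    have : ∀ i ∈ (Finset.univ : Finset (Fin k)),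
        ((bad i).card : ℝ) / Fintype.card (symplecticGroup (Fin g) (ZMod (p i)))
          ≤ 1 - (1 : ℝ) / (4 * g) := by
      intro i _
      let good : Finset (symplecticGroup (Fin g) (ZMod (p i))) :=
        Finset.univ.filter fun x => Irreducible x.1.charpoly
      have h1 := irr_count (p i) g (hp i).2 hg good (fun M => by simp [good])
      have h2 : good.card + (bad i).card = Fintype.card (symplecticGroup (Fin g) (ZMod (p i))) :=
        Finset.card_filter_add_card_filter_not _
      have h3 : 0 < Fintype.card (symplecticGroup (Fin g) (ZMod (p i))) := Fintype.card_pos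
      have h1R : (Fintype.card (symplecticGroup (Fin g) (ZMod (p i))) : ℝ) ≤ 4 * g * good.card := by
        exact_mod_cast h1
      have h2R : (good.card : ℝ) + (bad i).card = Fintype.card (symplecticGroup (Fin g) (ZMod (p i))) := by
        exact_mod_cast h2
      have h3R : (0 : ℝ) < Fintype.card (symplecticGroup (Fin g) (ZMod (p i))) := by
        exact_mod_cast h3
      rw [div_le_iff₀ h3R]
      have h4 : (1 : ℝ) / (4 * g) * Fintype.card (symplecticGroup (Fin g) (ZMod (p i))) ≤ good.card := by
        rw [div_mul_eq_mul_div, one_mul, div_le_iff₀ (by positivity)]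
        linarith
      linarith
    refine (Finset.prod_le_prod (fun i _ => by positivity) this).trans ?_
    simp

end Final

open scoped Classical in
/-- in a walk setup on `Sp(2g, ℤ)` with generating labels, the
proportion (by weight) of walks of length `N` whose product has reducible
characteristic polynomial over `ℚ` tends to `0` as `N → ∞`. -/
theorem stmt9 (g : ℕ) (hg : 1 ≤ g)
    (n : ℕ) (hn : 1 ≤ n) (A : Fin n → Fin n → ℕ)
    (t : Fin n → Matrix.symplecticGroup (Fin g) ℤ)
    (hsymm : ∀ i j, A i j = A j i)
    (hprim : ∃ k, 1 ≤ k ∧ ∀ i j, 0 < ((Matrix.of A) ^ k) i j)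
    (hgen : Subgroup.closure (Set.range t) = ⊤) :
    Filter.Tendsto (fun N : ℕ =>
        (∑ w ∈ Finset.univ.filter
            (fun w : Fin (N + 1) → Fin n =>
              ¬ Irreducible
                ((Matrix.charpoly
                    (((List.ofFn fun j => t (w j)).reverse.prod :
                        Matrix.symplecticGroup (Fin g) ℤ) :
                      Matrix (Fin g ⊕ Fin g) (Fin g ⊕ Fin g) ℤ)).map
                  (algebraMap ℤ ℚ))),
          ((∏ j : Fin N, A (w j.castSucc) (w j.succ) : ℕ) : ℝ)) /
        (∑ w : Fin (N + 1) → Fin n,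
          ((∏ j : Fin N, A (w j.castSucc) (w j.succ) : ℕ) : ℝ)))
      Filter.atTop (nhds 0) := by
  rw [Metric.tendsto_atTop']
  intro ε hε
  obtain ⟨k, p, hp, hinj, hp7, hfin, Bad, hBad, hlt⟩ := exists_quot g hg (ε / 2) (by positivity)
  have hsurj := redHom_surj g p (fun i => (hp i).1) hinj
  have hgen' : Subgroup.closure (Set.range fun i => redHom g p (t i)) = ⊤ := by
    have : (Set.range fun i => redHom g p (t i)) = redHom g p '' Set.range t := by
      rw [← Set.range_comp]; rfl
    rw [this, ← MonoidHom.map_closure, hgen, ← MonoidHom.range_eq_map, hsurj]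
  have hperf : commutator (∀ i, Matrix.symplecticGroup (Fin g) (ZMod (p i))) = ⊤ := by
    refine pi_perfect fun i => ?_
    have := hp7 i
    refine sp_perfect g ?_ ?_
    · exact_mod_cast zmod_ne (p i) 2 (by norm_num) (by omega)
    · exact_mod_cast zmod_ne (p i) 3 (by norm_num) (by omega)
  have hev := walk_bad A (fun i => redHom g p (t i)) hsymm hprim hgen' hperf Bad
    (ε / 4) (by positivity)
  obtain ⟨N0, hN0⟩ := Filter.eventually_atTop.1 hev
  refine ⟨N0, fun N hN => ?_⟩
  have hb := hN0 N hN.le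
  have htot : 0 ≤ ∑ w : Fin (N + 1) → Fin n,
      ((∏ j : Fin N, A (w j.castSucc) (w j.succ) : ℕ) : ℝ) :=
    Finset.sum_nonneg fun w _ => Nat.cast_nonneg _
  rw [Real.dist_eq, sub_zero, abs_of_nonneg
    (div_nonneg (Finset.sum_nonneg fun w _ => Nat.cast_nonneg _) htot)]
  have hle : (∑ w ∈ Finset.univ.filter
            (fun w : Fin (N + 1) → Fin n =>
              ¬ Irreducible
                ((Matrix.charpoly
                    (((List.ofFn fun j => t (w j)).reverse.prod :
                        Matrix.symplecticGroup (Fin g) ℤ) :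
                      Matrix (Fin g ⊕ Fin g) (Fin g ⊕ Fin g) ℤ)).map
                  (algebraMap ℤ ℚ))),
          ((∏ j : Fin N, A (w j.castSucc) (w j.succ) : ℕ) : ℝ)) ≤
      ∑ w : Fin (N + 1) → Fin n, ((∏ j : Fin N, A (w j.castSucc) (w j.succ) : ℕ) : ℝ) *
        (if (List.ofFn fun j => redHom g p (t (w j))).reverse.prod ∈ Bad then 1 else 0) := by
    rw [Finset.sum_filter]
    refine Finset.sum_le_sum fun w _ => ?_
    have hprod : (List.ofFn fun j => redHom g p (t (w j))).reverse.prod =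
        redHom g p (List.ofFn fun j => t (w j)).reverse.prod := by
      rw [map_list_prod, List.map_reverse, List.map_ofFn]; rfl
    split_ifs with h1 h2 h2
    · rw [mul_one]; exact Nat.cast_nonneg _
    · rw [mul_zero]
    · rw [mul_one]
    · exfalso
      apply h2
      rw [hprod, hBad]
      intro i hi
      exact h1 (irr_of_mod g (p i) _ hi)
  refine lt_of_le_of_lt (div_le_of_le_mul₀ htot (by positivity) (hle.trans hb)) ?_
  linarith
end

section
/- Fix m ≥ 2 and let Γ = SL(m, ℤ). Consider a walk setup on Γ (symmetric primitive adjacency matrix A : Fin n → Fin n → ℕ with vertex labels t : Fin n → Γ) such that the set {t i : i : Fin n} generates Γ. For each N, let q_N be (sum of the weights of walks w of length N such that the characteristic polynomial of the underlying m × m integer matrix of γ_w, mapped to ℚ[X], is not irreducible) / (sum of the weights of all walks of length N). Then q_N tends to 0 as N tends to infinity. -/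
open scoped BigOperators

namespace RW


open Matrix Matrix.SpecialLinearGroup commutatorElement in
lemma diag2n_decompose {ι F : Type*} [Fintype ι] [DecidableEq ι] [Field F] {i j : ι} (hij : i ≠ j)
    (a : F) (ha : a ≠ 0) :
    diag2n hij a ha = SpecialLinearGroup.transvection hij a *
      SpecialLinearGroup.transvection hij.symm (- a⁻¹) *
      SpecialLinearGroup.transvection hij a *
      SpecialLinearGroup.transvection hij (-1) *
      SpecialLinearGroup.transvection hij.symm 1 *
      SpecialLinearGroup.transvection hij (-1) := by
  apply Subtype.ext
  have h : (diag2n hij a ha).1 = 1 + single i i (a - 1) + single j j (a⁻¹ - 1) := by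
    rw [diag2n_coe]
    ext x y
    simp only [diagonal_apply, Matrix.add_apply, one_apply, single_apply]
    split_ifs <;> grind
  rw [h]
  simp only [coe_mul, transvection_coe, mul_add, add_mul, mul_one, one_mul, zero_mul, mul_zero,
    add_zero, zero_add,
    single_mul_single_same, single_mul_single_of_ne _ _ _ _ hij.symm,
    single_mul_single_of_ne _ _ _ _ hij]
  ext x y
  simp only [Matrix.add_apply, one_apply, single_apply, Matrix.zero_apply]
  clear h
  split_ifs <;> grind

open Matrix Matrix.SpecialLinearGroup commutatorElement in
lemma transvection_induction {ι F : Type*} [Fintype ι] [DecidableEq ι] [Field F] [Nontrivial ι]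
    (P : SpecialLinearGroup ι F → Prop)
    (htransvec : ∀ (i j : ι) (h : i ≠ j) c, P (SpecialLinearGroup.transvection h c))
    (hmul : ∀ A B, P A → P B → P (A * B)) (A : SpecialLinearGroup ι F) : P A := by
  refine diagonal_transvection_induction' P _ (fun i j hij c hc ↦ ?_) htransvec hmul
  rw [diag2n_decompose]
  refine hmul _ _ (hmul _ _ (hmul _ _ (hmul _ _ (hmul _ _ ?_ ?_) ?_) ?_) ?_) ?_
  all_goals exact htransvec _ _ _ _

open Matrix Matrix.SpecialLinearGroup commutatorElement in
lemma commutator_diag2n_transvection {ι F : Type*} [Fintype ι] [DecidableEq ι] [Field F] {i j : ι}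
    (hij : i ≠ j) (a : F) (ha : a ≠ 0) (b : F) :
    diag2n hij a ha * SpecialLinearGroup.transvection hij b =
    SpecialLinearGroup.transvection hij (b * (a ^ 2 - 1)) * 
      SpecialLinearGroup.transvection hij b * diag2n hij a ha := by
  rw [← transvection_add]
  apply Subtype.ext
  rw [coe_mul, coe_mul, diag2n_coe, transvection_coe, transvection_coe]
  ext x y
  simp only [Matrix.add_apply, Matrix.one_apply, Matrix.diagonal_mul,
    Matrix.mul_diagonal, single_apply]
  split_ifs <;> grind

open Matrix Matrix.SpecialLinearGroup commutatorElement in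
lemma commutator_SL_eq_top {ι F : Type*} [Fintype ι] [DecidableEq ι] [Field F] [Nontrivial ι]
    (a : F) (ha : a ≠ 0) (ha2 : a ^ 2 ≠ 1) : commutator (SpecialLinearGroup ι F) = ⊤ := by
  rw [eq_top_iff]
  rintro x -
  refine transvection_induction (fun x => x ∈ commutator (SpecialLinearGroup ι F)) ?_
    (fun A B => mul_mem) x
  intro i j hij c
  have h := commutator_diag2n_transvection hij a ha (c / (a ^ 2 - 1))
  rw [div_mul_cancel₀ c (sub_ne_zero_of_ne ha2)] at h
  have h2 : SpecialLinearGroup.transvection hij c =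
      ⁅diag2n hij a ha, SpecialLinearGroup.transvection hij (c / (a ^ 2 - 1))⁆ := by
    rw [commutatorElement_def, h]; group
  rw [h2]
  exact Subgroup.commutator_mem_commutator (Subgroup.mem_top _) (Subgroup.mem_top _)

open Matrix Matrix.SpecialLinearGroup commutatorElement in
lemma SL_map_surjective {ι : Type*} [Fintype ι] [DecidableEq ι] [Nontrivial ι]
    (p : ℕ) [Fact p.Prime] :
    Function.Surjective (SpecialLinearGroup.map (n := ι) (Int.castRingHom (ZMod p))) := by
  intro x
  refine transvection_induction (fun x => ∃ y, SpecialLinearGroup.map (Int.castRingHom (ZMod p)) y = x) ?_ ?_ x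
  · intro i j hij c
    obtain ⟨c, rfl⟩ := ZMod.intCast_surjective c
    refine ⟨SpecialLinearGroup.transvection hij c, ?_⟩
    ext x y
    simp [transvection_coe, Matrix.map_apply, one_apply, single_apply]
  · rintro _ _ ⟨y, rfl⟩ ⟨z, rfl⟩
    exact ⟨y * z, map_mul _ _ _⟩



/-- `Reach A t L i j g`: there is a walk of length `L` from `i` to `j` along edges of positive
multiplicity whose group element, not counting the label of the starting vertex, is `g`. -/
inductive Reach {G : Type*} [Group G] {n : ℕ} (A : Fin n → Fin n → ℕ) (t : Fin n → G) :
    ℕ → Fin n → Fin n → G → Prop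
  | nil (i : Fin n) : Reach A t 0 i i 1
  | snoc {L : ℕ} {i k : Fin n} {g : G} (h : Reach A t L i k g) (j : Fin n) (hA : 0 < A k j) :
      Reach A t (L + 1) i j (t j * g)

section Prim

variable {G : Type*} [Group G] {n : ℕ} {A : Fin n → Fin n → ℕ} {t : Fin n → G}

lemma Reach.trans {L L' : ℕ} {i j k : Fin n} {g h : G} (h1 : Reach A t L i j g)
    (h2 : Reach A t L' j k h) : Reach A t (L + L') i k (h * g) := by
  induction h2 with
  | nil => simpa using h1
  | snoc _ l hA ih => rw [mul_assoc]; exact (ih h1).snoc l hA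

lemma Reach.edge {i j : Fin n} (h : 0 < A i j) : Reach A t 1 i j (t j) := by
  simpa using (Reach.nil i).snoc (t := t) j h

lemma Reach.pow {L : ℕ} {i : Fin n} {g : G} (h : Reach A t L i i g) (k : ℕ) :
    Reach A t (L * k) i i (g ^ k) := by
  induction k with
  | zero => simpa using Reach.nil i
  | succ k ih => rw [pow_succ, Nat.mul_succ, add_comm]; exact h.trans ih

lemma reach_of_pow_pos (k : ℕ) : ∀ i j, 0 < ((Matrix.of A) ^ k) i j → ∃ g, Reach A t k i j g := by
  induction k with
  | zero =>
    intro i j h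
    by_cases hij : i = j
    · subst hij; exact ⟨1, .nil i⟩
    · simp [Matrix.one_apply, hij] at h
  | succ k ih =>
    intro i j h
    rw [pow_succ, Matrix.mul_apply] at h
    obtain ⟨l, -, hl⟩ := Finset.exists_ne_zero_of_sum_ne_zero h.ne'
    obtain ⟨g, hg⟩ := ih i l (Nat.pos_of_ne_zero (left_ne_zero_of_mul hl))
    exact ⟨_, hg.snoc j (Nat.pos_of_ne_zero (right_ne_zero_of_mul hl))⟩

lemma exists_pred {k : ℕ} (hk : 1 ≤ k) (hr : ∀ i j, ∃ g, Reach A t k i j g) (j : Fin n) :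
    ∃ i, 0 < A i j := by
  obtain ⟨g, hg⟩ := hr j j
  cases hg with
  | nil => omega
  | snoc h j hA => exact ⟨_, hA⟩

lemma reach_ge {k : ℕ} (hk : 1 ≤ k) (hr : ∀ i j, ∃ g, Reach A t k i j g) (L : ℕ) (hL : k ≤ L) :
    ∀ i j, ∃ g, Reach A t L i j g := by
  induction L, hL using Nat.le_induction with
  | base => exact hr
  | succ L hL ih =>
    intro i j
    obtain ⟨l, hl⟩ := exists_pred hk hr j
    obtain ⟨g, hg⟩ := ih i l
    exact ⟨_, hg.snoc j hl⟩

variable (A t) in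
/-- Group elements of loops at `i` of length divisible by the order of the group. -/
def loopGroup [Fintype G] (i : Fin n) : Subgroup G where
  carrier := {g | ∃ L, Reach A t (Fintype.card G * L) i i g}
  one_mem' := ⟨0, .nil i⟩
  mul_mem' := by
    rintro a b ⟨L, hL⟩ ⟨L', hL'⟩
    refine ⟨L' + L, ?_⟩
    rw [mul_add]
    exact hL'.trans hL
  inv_mem' := by
    rintro a ⟨L, hL⟩
    refine ⟨L * (Fintype.card G - 1), ?_⟩
    rw [← mul_assoc]
    have : a⁻¹ = a ^ (Fintype.card G - 1) := by
      rw [inv_eq_iff_mul_eq_one, ← pow_succ', Nat.sub_add_cancel Fintype.card_pos, pow_card_eq_one]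
    rw [this]
    exact hL.pow _

lemma mem_loopGroup [Fintype G] {i : Fin n} {g : G} :
    g ∈ loopGroup A t i ↔ ∃ L, Reach A t (Fintype.card G * L) i i g := Iff.rfl

lemma exists_return [Fintype G] {k : ℕ} (hk : 1 ≤ k) (hr : ∀ i j, ∃ g, Reach A t k i j g)
    (i j : Fin n) (L : ℕ) : ∃ L' y, Reach A t L' j i y ∧ L + L' = Fintype.card G * (L + k) := by
  have h1 : 1 * (L + k) ≤ Fintype.card G * (L + k) := Nat.mul_le_mul_right _ Fintype.card_pos
  obtain ⟨y, hy⟩ := reach_ge hk hr (Fintype.card G * (L + k) - L) (by omega) j i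
  exact ⟨_, y, hy, by omega⟩

lemma loop_F1 [Fintype G] {k : ℕ} (hk : 1 ≤ k) (hr : ∀ i j, ∃ g, Reach A t k i j g)
    {i j : Fin n} {L : ℕ} {x x' : G} (hx : Reach A t L i j x) (hx' : Reach A t L i j x') :
    x⁻¹ * x' ∈ loopGroup A t i := by
  obtain ⟨L', y, hy, hL⟩ := exists_return hk hr i j L
  have h1 : y * x ∈ loopGroup A t i := ⟨_, hL ▸ hx.trans hy⟩
  have h2 : y * x' ∈ loopGroup A t i := ⟨_, hL ▸ hx'.trans hy⟩
  have := mul_mem (inv_mem h1) h2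
  convert this using 1
  group

lemma loop_F2 [Fintype G] {k : ℕ} (hk : 1 ≤ k) (hr : ∀ i j, ∃ g, Reach A t k i j g)
    {i j : Fin n} {L : ℕ} {x g : G} (hx : Reach A t L i j x) (hg : g ∈ loopGroup A t i) :
    x * g * x⁻¹ ∈ loopGroup A t j := by
  obtain ⟨L', y, hy, hL⟩ := exists_return hk hr i j L
  obtain ⟨M, hM⟩ := hg
  have h1 : x * y ∈ loopGroup A t j := ⟨L + k, by
    rw [← hL, add_comm]; exact hy.trans hx⟩
  have h2 : x * (g * y) ∈ loopGroup A t j := ⟨L + k + M, by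
    rw [mul_add, ← hL, show L + L' + Fintype.card G * M = L' + Fintype.card G * M + L by ring]
    exact (hy.trans hM).trans hx⟩
  have := mul_mem h2 (inv_mem h1)
  convert this using 1
  group

lemma loop_F2' [Fintype G] {k : ℕ} (hk : 1 ≤ k) (hr : ∀ i j, ∃ g, Reach A t k i j g)
    {i j : Fin n} {L : ℕ} {x g : G} (hx : Reach A t L i j x) (hg : g ∈ loopGroup A t j) :
    x⁻¹ * g * x ∈ loopGroup A t i := by
  obtain ⟨L', y, hy, hL⟩ := exists_return hk hr i j L
  obtain ⟨M, hM⟩ := hg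
  have h1 : y * x ∈ loopGroup A t i := ⟨_, hL ▸ hx.trans hy⟩
  have h2 : y * (g * x) ∈ loopGroup A t i := ⟨L + k + M, by
    rw [mul_add, ← hL, show L + L' + Fintype.card G * M = L + Fintype.card G * M + L' by ring]
    exact (hx.trans hM).trans hy⟩
  have := mul_mem (inv_mem h1) h2
  convert this using 1
  group

lemma loop_F3 [Fintype G] {k : ℕ} (hk : 1 ≤ k) (hr : ∀ i j, ∃ g, Reach A t k i j g)
    (hsymm : ∀ i j, A i j = A j i) {i i' j : Fin n} (h : 0 < A j i) (h' : 0 < A j i') :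
    (t i)⁻¹ * t i' ∈ loopGroup A t j := by
  have h1 := (Reach.edge (t := t) h).trans (Reach.edge (t := t) (hsymm j i ▸ h))
  have h2 := (Reach.edge (t := t) h').trans (Reach.edge (t := t) (hsymm j i' ▸ h'))
  convert loop_F1 hk hr h1 h2 using 1
  group

lemma loop_F4 [Fintype G] {k : ℕ} (hk : 1 ≤ k) (hr : ∀ i j, ∃ g, Reach A t k i j g)
    (hsymm : ∀ i j, A i j = A j i) {i i' j : Fin n} (h : 0 < A j i) (h' : 0 < A j i') :
    loopGroup A t i ≤ loopGroup A t i' := by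
  intro g hg
  have h1 := loop_F2' hk hr (Reach.edge (t := t) h) hg
  have hu := loop_F3 hk hr hsymm h h'
  have h2 := loop_F2 hk hr (Reach.edge (t := t) h') (mul_mem (mul_mem (inv_mem hu) h1) hu)
  convert h2 using 1
  group

lemma rel_all {k : ℕ} (hr : ∀ i j, ∃ g, Reach A t (2 * k) i j g)
    (hsymm : ∀ i j, A i j = A j i) (P : Fin n → Fin n → Prop) (hrefl : ∀ i, P i i)
    (htrans : ∀ i j k, P i j → P j k → P i k)
    (hE : ∀ i i' j, 0 < A j i → 0 < A j i' → P i i') (i j : Fin n) : P i j := by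
  have key : ∀ L : ℕ, ∀ i j g, Reach A t (2 * L) i j g → P i j := by
    intro L
    induction L with
    | zero => intro i j g h; cases h; exact hrefl _
    | succ L ih =>
      intro i j g h
      cases h with
      | snoc h j hA =>
        cases h with
        | snoc h b hA' =>
          exact htrans _ _ _ (ih _ _ _ h) (hE _ _ _ (by rw [hsymm]; exact hA') hA)
  obtain ⟨g, hg⟩ := hr i j
  exact key k i j g hg

lemma loopGroup_eq_top [Fintype G] {k : ℕ} (hk : 1 ≤ k) (hr : ∀ i j, ∃ g, Reach A t k i j g)
    (hsymm : ∀ i j, A i j = A j i) (hgen : Subgroup.closure (Set.range t) = ⊤)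
    (hperf : commutator G = ⊤) (o : Fin n) : loopGroup A t o = ⊤ := by
  have hr2 := reach_ge hk hr (2 * k) (by omega)
  have hle : ∀ i j, loopGroup A t i ≤ loopGroup A t j :=
    rel_all hr2 hsymm _ (fun i => le_rfl) (fun i j k => le_trans)
      (fun i i' j h h' => loop_F4 hk hr hsymm h h')
  have hlab : ∀ i j, (t i)⁻¹ * t j ∈ loopGroup A t o :=
    rel_all hr2 hsymm _ (fun i => by simp)
      (fun i j k h1 h2 => by simpa [mul_assoc] using mul_mem h1 h2)
      (fun i i' j h h' => hle j o (loop_F3 hk hr hsymm h h'))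
  have hnorm : (loopGroup A t o).Normal := by
    rw [← Subgroup.normalizer_eq_top_iff, eq_top_iff, ← hgen, Subgroup.closure_le]
    rintro _ ⟨i, rfl⟩
    obtain ⟨j, hj⟩ := exists_pred hk hr i
    rw [SetLike.mem_coe, Subgroup.mem_normalizer_iff]
    intro h
    constructor
    · intro hh
      exact hle i o (loop_F2 hk hr (Reach.edge (t := t) hj) (hle o j hh))
    · intro hh
      have := hle j o (loop_F2' hk hr (Reach.edge (t := t) hj) (hle o i hh))
      simpa [mul_assoc] using this
  rw [eq_top_iff, ← hperf, ← Subgroup.Normal.quotient_commutative_iff_commutator_le]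
  have hz : ∀ x : G, (x : G ⧸ loopGroup A t o) ∈ Subgroup.zpowers ((t o : G) : G ⧸ loopGroup A t o) := by
    intro x
    have hx : x ∈ Subgroup.closure (Set.range t) := hgen ▸ Subgroup.mem_top x
    induction hx using Subgroup.closure_induction with
    | mem x hx =>
      obtain ⟨i, rfl⟩ := hx
      rw [← (QuotientGroup.eq.2 (hlab o i))]
      exact Subgroup.mem_zpowers _
    | one => exact one_mem _
    | mul x y _ _ hx hy => exact mul_mem hx hy
    | inv x _ hx => exact inv_mem hx
  refine ⟨⟨?_⟩⟩
  intro x y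
  obtain ⟨x, rfl⟩ := QuotientGroup.mk_surjective x
  obtain ⟨y, rfl⟩ := QuotientGroup.mk_surjective y
  obtain ⟨a, ha⟩ := Subgroup.mem_zpowers_iff.1 (hz x)
  obtain ⟨b, hb⟩ := Subgroup.mem_zpowers_iff.1 (hz y)
  change (x : G ⧸ loopGroup A t o) * y = y * x
  rw [← ha, ← hb, ← zpow_add, ← zpow_add, add_comm]

lemma exists_reach_all [Fintype G] {k : ℕ} (hk : 1 ≤ k) (hr : ∀ i j, ∃ g, Reach A t k i j g)
    (hsymm : ∀ i j, A i j = A j i) (hgen : Subgroup.closure (Set.range t) = ⊤)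
    (hperf : commutator G = ⊤) : ∃ K, ∀ i j g, Reach A t K i j g := by
  have h : ∀ (i : Fin n) (g : G), ∃ L, Reach A t (Fintype.card G * L) i i g := by
    intro i g
    rw [← mem_loopGroup, loopGroup_eq_top hk hr hsymm hgen hperf i]
    trivial
  choose L hL using h
  obtain ⟨L0, hL0⟩ : ∃ L0, ∀ i g, L i g ≤ L0 :=
    ⟨∑ i, ∑ g, L i g, fun i g =>
      (Finset.single_le_sum (f := fun g => L i g) (fun _ _ => Nat.zero_le _) (Finset.mem_univ g)).trans
        (Finset.single_le_sum (f := fun i => ∑ g, L i g) (fun _ _ => Nat.zero_le _) (Finset.mem_univ i))⟩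
  refine ⟨k + Fintype.card G * (L0 + k), fun i j g => ?_⟩
  obtain ⟨x, hx⟩ := hr i j
  have h1 := hL j (g * x⁻¹)
  have h2 := hL0 j (g * x⁻¹)
  obtain ⟨y, hy⟩ := reach_ge hk hr (L0 - L j (g * x⁻¹) + k) (by omega) j j
  have h3 := hy.pow (Fintype.card G)
  rw [pow_card_eq_one] at h3
  have h4 := hx.trans (h3.trans h1)
  rw [mul_one, inv_mul_cancel_right] at h4
  convert h4 using 2
  rw [mul_comm _ (Fintype.card G), ← mul_add]
  congr 1
  omega

end Prim


section Dyn

variable {G : Type*} [Group G] [Fintype G] [DecidableEq G] {n : ℕ}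

/-- total weight of walks of length `N` ending in `j` with group element `h` -/
noncomputable def wt (A : Fin n → Fin n → ℕ) (t : Fin n → G) : ℕ → Fin n → G → ℝ
  | 0, j, h => if h = t j then 1 else 0
  | N + 1, j, h => ∑ i, (A i j : ℝ) * wt A t N i ((t j)⁻¹ * h)

/-- number of walks of length `K` from `i` to `j` with group element `g`, the label of the start
not being counted -/
noncomputable def trn (A : Fin n → Fin n → ℕ) (t : Fin n → G) : ℕ → Fin n → Fin n → G → ℕ
  | 0, i, j, g => if i = j ∧ g = 1 then 1 else 0
  | K + 1, i, j, g => ∑ k, trn A t K i k ((t j)⁻¹ * g) * A k j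

variable {A : Fin n → Fin n → ℕ} {t : Fin n → G}

lemma wt_nonneg (N : ℕ) : ∀ j h, 0 ≤ wt A t N j h := by
  induction N with
  | zero => intro j h; simp only [wt]; split_ifs <;> norm_num
  | succ N ih =>
    intro j h
    simp only [wt]
    exact Finset.sum_nonneg fun i _ => mul_nonneg (Nat.cast_nonneg _) (ih _ _)

lemma trn_pos {K : ℕ} {i j : Fin n} {g : G} (h : Reach A t K i j g) : 1 ≤ trn A t K i j g := by
  induction h with
  | nil => simp [trn]
  | @snoc L i k g h j hA ih =>
    simp only [trn, inv_mul_cancel_left]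
    refine le_trans ?_ (Finset.single_le_sum (f := fun k => trn A t L i k g * A k j)
      (fun _ _ => Nat.zero_le _) (Finset.mem_univ k))
    exact Nat.mul_pos ih hA

lemma wt_add (N K : ℕ) : ∀ j h, wt A t (N + K) j h =
    ∑ i, ∑ g, (trn A t K i j g : ℝ) * wt A t N i (g⁻¹ * h) := by
  induction K with
  | zero =>
    intro j h
    simp [trn, ite_and]
  | succ K ih =>
    intro j h
    rw [← add_assoc]
    simp only [wt, ih, trn]
    simp only [Finset.mul_sum, Nat.cast_sum, Finset.sum_mul]
    rw [Finset.sum_comm]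
    refine Finset.sum_congr rfl fun i _ => ?_
    conv_rhs => rw [Finset.sum_comm]
    refine Finset.sum_congr rfl fun k _ => ?_
    refine Fintype.sum_equiv (Equiv.mulLeft (t j)) _ _ fun g => ?_
    simp [mul_assoc]
    ring

lemma sum_translate (f : G → ℝ) (g : G) : ∑ h, f (g⁻¹ * h) = ∑ h, f h :=
  Fintype.sum_equiv (Equiv.mulLeft g⁻¹) _ _ fun _ => rfl

/-- total weight of walks ending in `j` -/
noncomputable def tot (A : Fin n → Fin n → ℕ) (t : Fin n → G) (N : ℕ) (j : Fin n) : ℝ :=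
  ∑ h, wt A t N j h

lemma tot_succ (N : ℕ) (j : Fin n) : tot A t (N + 1) j = ∑ i, (A i j : ℝ) * tot A t N i := by
  simp only [tot, wt]
  rw [Finset.sum_comm]
  refine Finset.sum_congr rfl fun i _ => ?_
  rw [← Finset.mul_sum, sum_translate]

lemma tot_add (N K : ℕ) (j : Fin n) : tot A t (N + K) j =
    ∑ i, ∑ g, (trn A t K i j g : ℝ) * tot A t N i := by
  simp only [tot, wt_add]
  rw [Finset.sum_comm]
  refine Finset.sum_congr rfl fun i _ => ?_
  rw [Finset.sum_comm]
  refine Finset.sum_congr rfl fun g _ => ?_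
  rw [← Finset.mul_sum, sum_translate]

lemma tot_pos (hp : ∀ j, ∃ i, 0 < A i j) (N : ℕ) : ∀ j, 0 < tot A t N j := by
  induction N with
  | zero => intro j; simp [tot, wt]
  | succ N ih =>
    intro j
    rw [tot_succ]
    obtain ⟨i, hi⟩ := hp j
    refine Finset.sum_pos' (fun i _ => mul_nonneg (Nat.cast_nonneg _) (ih i).le)
      ⟨i, Finset.mem_univ _, mul_pos (by exact_mod_cast hi) (ih i)⟩

lemma bound_step {N : ℕ} {M : ℝ} (h : ∀ j h, wt A t N j h ≤ M * tot A t N j) :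
    ∀ j h, wt A t (N + 1) j h ≤ M * tot A t (N + 1) j := by
  intro j g
  rw [tot_succ, Finset.mul_sum]
  simp only [wt]
  refine Finset.sum_le_sum fun i _ => ?_
  have := mul_le_mul_of_nonneg_left (h i ((t j)⁻¹ * g)) (Nat.cast_nonneg (α := ℝ) (A i j))
  linarith

lemma bound_mono {N : ℕ} {M : ℝ} (h : ∀ j h, wt A t N j h ≤ M * tot A t N j) (N' : ℕ)
    (hN : N ≤ N') : ∀ j h, wt A t N' j h ≤ M * tot A t N' j := by
  induction N', hN using Nat.le_induction with
  | base => exact h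
  | succ L hL ih => exact bound_step ih

lemma bound_contract (hp : ∀ j, ∃ i, 0 < A i j) {K : ℕ} (hK : ∀ i j g, Reach A t K i j g) :
    ∃ r : ℝ, 0 ≤ r ∧ r < 1 ∧ ∀ N δ, 0 ≤ δ →
      (∀ j h, wt A t N j h ≤ (1 + δ) / Fintype.card G * tot A t N j) →
      (∀ j h, wt A t (N + K) j h ≤ (1 + r * δ) / Fintype.card G * tot A t (N + K) j) := by
  have hc : (0 : ℝ) < Fintype.card G := by exact_mod_cast Fintype.card_pos
  obtain ⟨C, hC, hCc⟩ : ∃ C : ℝ, (∀ i j, ∑ g, (trn A t K i j g : ℝ) ≤ C) ∧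
      (Fintype.card G : ℝ) ≤ C := by
    refine ⟨(∑ i, ∑ j, ∑ g, (trn A t K i j g : ℝ)) + Fintype.card G, fun i j => ?_, ?_⟩
    · have h1 := Finset.single_le_sum (f := fun j => ∑ g, (trn A t K i j g : ℝ))
        (fun _ _ => Finset.sum_nonneg fun _ _ => Nat.cast_nonneg _) (Finset.mem_univ j)
      have h2 := Finset.single_le_sum (f := fun i => ∑ j, ∑ g, (trn A t K i j g : ℝ))
        (fun _ _ => Finset.sum_nonneg fun _ _ => Finset.sum_nonneg fun _ _ => Nat.cast_nonneg _)
        (Finset.mem_univ i)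
      linarith
    · have : 0 ≤ ∑ i, ∑ j, ∑ g, (trn A t K i j g : ℝ) :=
        Finset.sum_nonneg fun _ _ => Finset.sum_nonneg fun _ _ =>
          Finset.sum_nonneg fun _ _ => Nat.cast_nonneg _
      linarith
  have hC0 : 0 < C := hc.trans_le hCc
  refine ⟨1 - (Fintype.card G : ℝ) / C, ?_, ?_, ?_⟩
  · rw [sub_nonneg, div_le_one hC0]; exact hCc
  · have := div_pos hc hC0; linarith
  intro N δ hδ hb j h
  set c : ℝ := ((Fintype.card G : ℕ) : ℝ) with hcdef
  set S : ℝ := ∑ i, tot A t N i with hS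
  have e1 : wt A t (N + K) j h ≤ S + (1 + δ) / c * (tot A t (N + K) j - c * S) := by
    have h1 : ∑ i, ∑ g, wt A t N i (g⁻¹ * h) = S := by
      rw [hS]
      refine Finset.sum_congr rfl fun i _ => ?_
      rw [tot]
      refine Fintype.sum_equiv ((Equiv.inv G).trans (Equiv.mulRight h)) _ _ fun g => rfl
    have h2 : wt A t (N + K) j h =
        S + ∑ i, ∑ g, ((trn A t K i j g : ℝ) - 1) * wt A t N i (g⁻¹ * h) := by
      rw [wt_add, ← h1, ← Finset.sum_add_distrib]
      refine Finset.sum_congr rfl fun i _ => ?_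
      rw [← Finset.sum_add_distrib]
      refine Finset.sum_congr rfl fun g _ => ?_
      ring
    have h3 : tot A t (N + K) j - c * S =
        ∑ i, ∑ g, ((trn A t K i j g : ℝ) - 1) * tot A t N i := by
      rw [tot_add, hS, Finset.mul_sum, ← Finset.sum_sub_distrib]
      refine Finset.sum_congr rfl fun i _ => ?_
      simp [sub_mul, hcdef]
    rw [h2, h3, Finset.mul_sum]
    gcongr with i _
    rw [Finset.mul_sum]
    refine Finset.sum_le_sum fun g _ => ?_
    have h4 : (0 : ℝ) ≤ (trn A t K i j g : ℝ) - 1 := by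
      have := trn_pos (hK i j g)
      rw [sub_nonneg]; exact_mod_cast this
    have := mul_le_mul_of_nonneg_left (hb i (g⁻¹ * h)) h4
    linarith
  have e2 : tot A t (N + K) j ≤ C * S := by
    rw [tot_add, hS, Finset.mul_sum]
    refine Finset.sum_le_sum fun i _ => ?_
    rw [← Finset.sum_mul]
    exact mul_le_mul_of_nonneg_right (hC i j) (tot_pos hp N i).le
  refine e1.trans ?_
  have e3 : tot A t (N + K) j / C ≤ S := by rw [div_le_iff₀ hC0]; linarith
  have e4 := mul_le_mul_of_nonneg_left e3 hδ
  have e5 : S + (1 + δ) / c * (tot A t (N + K) j - c * S) =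
      (1 + δ) / c * tot A t (N + K) j - δ * S := by field_simp; ring
  have e6 : (1 + (1 - c / C) * δ) / c * tot A t (N + K) j =
      (1 + δ) / c * tot A t (N + K) j - δ * (tot A t (N + K) j / C) := by field_simp; ring
  rw [e5, e6]
  linarith

lemma equidist (hp : ∀ j, ∃ i, 0 < A i j) {K : ℕ} (hK : ∀ i j g, Reach A t K i j g) {ε : ℝ}
    (hε : 0 < ε) : ∃ N₀, ∀ N, N₀ ≤ N → ∀ j h,
      wt A t N j h ≤ (1 + ε) / Fintype.card G * tot A t N j := by
  have hc : (0 : ℝ) < Fintype.card G := by exact_mod_cast Fintype.card_pos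
  obtain ⟨r, hr0, hr1, hr⟩ := bound_contract hp hK
  have key : ∀ l : ℕ, ∀ j h, wt A t (l * K) j h ≤
      (1 + r ^ l * Fintype.card G) / Fintype.card G * tot A t (l * K) j := by
    intro l
    induction l with
    | zero =>
      intro j h
      rw [pow_zero, one_mul]
      have h1 : wt A t (0 * K) j h ≤ tot A t (0 * K) j :=
        Finset.single_le_sum (f := fun h => wt A t (0 * K) j h) (fun _ _ => wt_nonneg _ _ _)
          (Finset.mem_univ h)
      have h2 := (tot_pos (t := t) hp (0 * K) j).le
      have h3 : (1 : ℝ) ≤ (1 + Fintype.card G) / Fintype.card G := by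
        rw [one_le_div hc]; linarith
      nlinarith
    | succ l ih =>
      intro j h
      have := hr (l * K) (r ^ l * Fintype.card G) (by positivity) ih j h
      rw [Nat.succ_mul, pow_succ']
      rwa [mul_assoc]
  have hlim : Filter.Tendsto (fun l : ℕ => r ^ l * (Fintype.card G : ℝ)) Filter.atTop (nhds 0) := by
    simpa using (tendsto_pow_atTop_nhds_zero_of_lt_one hr0 hr1).mul_const (Fintype.card G : ℝ)
  obtain ⟨l, hl⟩ := (hlim.eventually (gt_mem_nhds hε)).exists
  refine ⟨l * K, fun N hN j h => (bound_mono (key l) N hN j h).trans ?_⟩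
  refine mul_le_mul_of_nonneg_right ?_ (tot_pos hp N j).le
  gcongr

lemma sum_walks (N : ℕ) : ∀ f : Fin n → G → ℝ,
    ∑ w : Fin (N + 1) → Fin n, ((∏ j : Fin N, A (w j.castSucc) (w j.succ) : ℕ) : ℝ) *
      f (w (Fin.last N)) (List.ofFn fun j => t (w j)).reverse.prod =
    ∑ j, ∑ h, wt A t N j h * f j h := by
  induction N with
  | zero =>
    intro f
    simp only [wt, ite_mul, one_mul, zero_mul, Finset.sum_ite_eq', Finset.mem_univ, if_true]
    refine Fintype.sum_equiv (Equiv.funUnique (Fin 1) (Fin n)) _ _ fun w => ?_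
    simp
  | succ N ih =>
    intro f
    rw [← (Fin.snocEquiv (fun _ : Fin (N + 2) => Fin n)).sum_comp, Fintype.sum_prod_type,
      Finset.sum_comm]
    have h1 : ∀ (w : Fin (N + 1) → Fin n) (k : Fin n),
        ((∏ j : Fin (N + 1), A (Fin.snoc (α := fun _ => Fin n) w k j.castSucc)
          (Fin.snoc (α := fun _ => Fin n) w k j.succ) : ℕ) : ℝ) *
        f (Fin.snoc (α := fun _ => Fin n) w k (Fin.last (N + 1)))
          (List.ofFn fun j => t (Fin.snoc (α := fun _ => Fin n) w k j)).reverse.prod =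
        ((∏ j : Fin N, A (w j.castSucc) (w j.succ) : ℕ) : ℝ) * (A (w (Fin.last N)) k *
          f k (t k * (List.ofFn fun j => t (w j)).reverse.prod)) := by
      intro w k
      rw [Fin.prod_univ_castSucc, List.ofFn_succ']
      simp only [Fin.snoc_castSucc, Fin.snoc_last, ← Fin.castSucc_succ, Fin.succ_last,
        List.concat_eq_append, List.reverse_append, List.reverse_singleton,
        List.singleton_append, List.prod_cons]
      push_cast
      ring
    have h2 := ih (fun i g => ∑ k, (A i k : ℝ) * f k (t k * g))
    simp only [Fin.snocEquiv, Equiv.coe_fn_mk]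
    simp only [h1, ← Finset.mul_sum]
    rw [h2]
    simp only [wt, Finset.mul_sum, Finset.sum_mul]
    simp only [Finset.sum_comm (s := (Finset.univ : Finset G)) (t := (Finset.univ : Finset (Fin n)))]
    rw [Finset.sum_comm]
    refine Finset.sum_congr rfl fun k _ => Finset.sum_congr rfl fun i _ => ?_
    refine Fintype.sum_equiv (Equiv.mulLeft (t k)) _ _ fun g => ?_
    simp
    ring

lemma walks_main (hsymm : ∀ i j, A i j = A j i)
    (hprim : ∃ k, 1 ≤ k ∧ ∀ i j, 0 < ((Matrix.of A) ^ k) i j)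
    (hgen : Subgroup.closure (Set.range t) = ⊤) (hperf : commutator G = ⊤) (B : Finset G)
    {ε : ℝ} (hε : 0 < ε) : ∃ N₀, ∀ N, N₀ ≤ N →
    ∑ w ∈ Finset.univ.filter (fun w : Fin (N + 1) → Fin n =>
      (List.ofFn fun j => t (w j)).reverse.prod ∈ B),
        ((∏ j : Fin N, A (w j.castSucc) (w j.succ) : ℕ) : ℝ) ≤
      (1 + ε) * (B.card / Fintype.card G) *
      ∑ w : Fin (N + 1) → Fin n, ((∏ j : Fin N, A (w j.castSucc) (w j.succ) : ℕ) : ℝ) := by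
  obtain ⟨k, hk, hpos⟩ := hprim
  have hr : ∀ i j, ∃ g, Reach A t k i j g := fun i j => reach_of_pow_pos k i j (hpos i j)
  obtain ⟨K, hK⟩ := exists_reach_all hk hr hsymm hgen hperf
  obtain ⟨N₀, hN₀⟩ := equidist (exists_pred hk hr) hK hε
  refine ⟨N₀, fun N hN => ?_⟩
  have h1 := sum_walks (A := A) (t := t) N (fun _ g => if g ∈ B then 1 else 0)
  have h2 := sum_walks (A := A) (t := t) N (fun _ g => 1)
  simp only [mul_one] at h2
  simp only [mul_ite, mul_one, mul_zero] at h1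
  rw [Finset.sum_filter, h1, h2, Finset.mul_sum]
  refine Finset.sum_le_sum fun j _ => ?_
  rw [← Finset.sum_filter]
  calc _ ≤ ∑ g ∈ Finset.univ.filter (· ∈ B), (1 + ε) / Fintype.card G * tot A t N j :=
        Finset.sum_le_sum fun g _ => hN₀ N hN j g
    _ = (1 + ε) * (B.card / Fintype.card G) * tot A t N j := by
        simp
        ring

lemma walks_total_pos (hn : 1 ≤ n)
    (hprim : ∃ k, 1 ≤ k ∧ ∀ i j, 0 < ((Matrix.of A) ^ k) i j) (N : ℕ) :
    0 < ∑ w : Fin (N + 1) → Fin n, ((∏ j : Fin N, A (w j.castSucc) (w j.succ) : ℕ) : ℝ) := by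
  obtain ⟨k, hk, hpos⟩ := hprim
  have hr : ∀ i j, ∃ g, Reach A (fun _ => (1 : Unit)) k i j g :=
    fun i j => reach_of_pow_pos k i j (hpos i j)
  have h2 := sum_walks (A := A) (t := fun _ => (1 : Unit)) N (fun _ g => 1)
  simp only [mul_one] at h2
  rw [h2]
  have : Nonempty (Fin n) := ⟨⟨0, hn⟩⟩
  exact Finset.sum_pos (fun j _ => tot_pos (exists_pred hk hr) N j) Finset.univ_nonempty

end Dyn


section Poly

open MvPolynomial

/-- the factor of the auxiliary symmetric polynomial attached to a set of eigenvalues -/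
noncomputable def phiF (m : ℕ) (S : Finset (Fin m)) : MvPolynomial (Fin m) ℤ :=
  (∏ i ∈ S, X i) ^ (2 * m) - (∏ i, X i) ^ (2 * S.card)

/-- the auxiliary symmetric polynomial -/
noncomputable def phi (m : ℕ) : MvPolynomial (Fin m) ℤ :=
  ∏ S ∈ Finset.univ.filter (fun S : Finset (Fin m) => S ≠ ∅ ∧ S ≠ Finset.univ), phiF m S

lemma phi_symm (m : ℕ) : (phi m).IsSymmetric := by
  intro e
  rw [phi, map_prod]
  refine Finset.prod_equiv (Equiv.finsetCongr e) ?_ ?_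
  · intro S
    have h1 : S.map e.toEmbedding = ∅ ↔ S = ∅ := Finset.map_eq_empty
    have h2 : S.map e.toEmbedding = Finset.univ ↔ S = Finset.univ := by
      rw [← Finset.card_eq_iff_eq_univ, ← Finset.card_eq_iff_eq_univ, Finset.card_map]
    simp [Equiv.finsetCongr, h2]
  · intro S _
    simp only [phiF, map_sub, map_pow, map_prod, rename_X, Equiv.finsetCongr_apply,
      Finset.prod_map, Finset.card_map, Equiv.coe_toEmbedding]
    congr 2
    exact Fintype.prod_equiv e _ _ fun _ => rfl

lemma exists_P (m : ℕ) : ∃ P : MvPolynomial (Fin m) ℤ,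
    aeval (fun i : Fin m => esymm (Fin m) ℤ (i + 1)) P = phi m := by
  obtain ⟨P, hP⟩ := esymmAlgHom_surjective (σ := Fin m) (R := ℤ) (n := m) (by simp)
    ⟨phi m, phi_symm m⟩
  refine ⟨P, ?_⟩
  rw [← esymmAlgHom_apply, hP]

/-- the auxiliary polynomial in the entries of a matrix -/
noncomputable def polyF (m : ℕ) : MvPolynomial (Fin m × Fin m) ℤ :=
  aeval (fun i : Fin m => (-1) ^ ((i : ℕ) + 1) *
    (Matrix.charpoly.univ ℤ (Fin m)).coeff (m - (i + 1))) (exists_P m).choose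

lemma polyF_eval {m : ℕ} {K : Type*} [Field K] (M : Matrix (Fin m) (Fin m) K) (α : Fin m → K)
    (h : M.charpoly = ∏ i, (Polynomial.X - Polynomial.C (α i))) :
    aeval (fun x : Fin m × Fin m => M x.1 x.2) (polyF m) = aeval α (phi m) := by
  have hP := (exists_P m).choose_spec
  rw [polyF]
  generalize (exists_P m).choose = P at hP ⊢
  rw [← hP]
  rw [comp_aeval_apply, comp_aeval_apply]
  congr 2
  funext i
  rw [map_mul, map_pow, map_neg, map_one, aeval_esymm_eq_multiset_esymm]
  have h1 := Matrix.charpoly.univ_coeff_eval₂Hom (Fin m) (algebraMap ℤ K)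
    (fun x : Fin m × Fin m => M x.1 x.2) (m - (i + 1))
  have h2 : (Matrix.of (Function.curry fun x : Fin m × Fin m => M x.1 x.2)) = M := rfl
  rw [h2] at h1
  have h3 : aeval (fun x : Fin m × Fin m => M x.1 x.2)
      ((Matrix.charpoly.univ ℤ (Fin m)).coeff (m - (i + 1))) = M.charpoly.coeff (m - (i + 1)) := h1
  rw [h3, h]
  have h4 := Multiset.prod_X_sub_C_coeff (Finset.univ.val.map α) (k := m - (i + 1)) (by simp)
  simp only [Multiset.map_map, Multiset.card_map, Finset.card_val, Finset.card_univ,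
    Fintype.card_fin] at h4
  have h5 : m - (m - (i + 1)) = (i : ℕ) + 1 := by omega
  rw [h5] at h4
  have h6 : (∏ i, (Polynomial.X - Polynomial.C (α i))) =
    (Multiset.map ((fun t ↦ Polynomial.X - Polynomial.C t) ∘ α) Finset.univ.val).prod := rfl
  rw [h6, h4, ← mul_assoc, ← mul_pow]
  simp

lemma phi_eval {m : ℕ} {K : Type*} [Field K] (α : Fin m → K) : aeval α (phi m) =
    ∏ S ∈ Finset.univ.filter (fun S : Finset (Fin m) => S ≠ ∅ ∧ S ≠ Finset.univ),
      ((∏ i ∈ S, α i) ^ (2 * m) - (∏ i, α i) ^ (2 * S.card)) := by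
  simp [phi, phiF, map_prod]

lemma charpoly_smul_prod {m : ℕ} {K : Type*} [Field K] [Infinite K]
    (M : Matrix (Fin m) (Fin m) K) (α : Fin m → K)
    (h : M.charpoly = ∏ i, (Polynomial.X - Polynomial.C (α i))) (c : K) (hc : c ≠ 0) :
    (c • M).charpoly = ∏ i, (Polynomial.X - Polynomial.C (c * α i)) := by
  refine Polynomial.funext fun x => ?_
  have h1 : Matrix.scalar (Fin m) x - c • M = c • (Matrix.scalar (Fin m) (x / c) - M) := by
    rw [smul_sub]
    congr 1
    ext i j
    by_cases hij : i = j
    · subst hij; simp [mul_div_cancel₀ _ hc]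
    · simp [hij]
  rw [Matrix.eval_charpoly, h1, Matrix.det_smul, ← Matrix.eval_charpoly, h]
  simp only [Polynomial.eval_prod, Polynomial.eval_sub, Polynomial.eval_X, Polynomial.eval_C,
    Fintype.card_fin]
  have : c ^ m = ∏ _i : Fin m, c := by simp
  rw [this, ← Finset.prod_mul_distrib]
  refine Finset.prod_congr rfl fun i _ => ?_
  field_simp

lemma exists_roots {m : ℕ} {K : Type*} [Field K] [IsAlgClosed K] (q : Polynomial K)
    (hq : q.Monic) (hd : q.natDegree = m) :
    ∃ α : Fin m → K, q = ∏ i, (Polynomial.X - Polynomial.C (α i)) := by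
  have hs : q.Splits := IsAlgClosed.splits q
  have hcard : q.roots.card = m := by rw [← hd, hs.natDegree_eq_card_roots]
  have hl : q.roots.toList.length = m := by simp [hcard]
  subst hl
  refine ⟨fun i => q.roots.toList.get i, ?_⟩
  have h1 := hs.eq_prod_roots_of_monic hq
  conv_lhs => rw [h1]
  conv_lhs => rw [← Multiset.coe_toList q.roots]
  rw [Multiset.map_coe, Multiset.prod_coe, Fin.prod_univ_def, ← List.ofFn_eq_map]
  congr 1
  conv_lhs => rw [← List.ofFn_get q.roots.toList]
  rw [List.map_ofFn]
  rfl

lemma phi_scale {m : ℕ} {K : Type*} [Field K] (α : Fin m → K) (c : K)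
    (h : aeval α (phi m) = 0) : aeval (fun i => c * α i) (phi m) = 0 := by
  rw [phi_eval, Finset.prod_eq_zero_iff] at h ⊢
  obtain ⟨S, hS, h⟩ := h
  refine ⟨S, hS, ?_⟩
  rw [Finset.prod_mul_distrib, Finset.prod_mul_distrib, mul_pow, mul_pow, sub_eq_zero.mp h]
  simp only [Finset.prod_const, Finset.card_univ, Fintype.card_fin, ← pow_mul]
  rw [sub_eq_zero]
  congr 2
  ring

lemma polyF_scale_aux {m : ℕ} {K : Type*} (L : Type*) [Field K] [Field L] [Algebra K L]
    [IsAlgClosed L] (M : Matrix (Fin m) (Fin m) K) (c : K)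
    (hc : c ≠ 0) (h : aeval (fun x : Fin m × Fin m => M x.1 x.2) (polyF m) = 0) :
    aeval (fun x : Fin m × Fin m => (c • M) x.1 x.2) (polyF m) = 0 := by
  have hinj := FaithfulSMul.algebraMap_injective K L
  let M' := M.map (algebraMap K L)
  obtain ⟨α, hα⟩ := exists_roots M'.charpoly M'.charpoly_monic (by
    rw [Matrix.charpoly_natDegree_eq_dim, Fintype.card_fin])
  have : Infinite L := IsAlgClosed.instInfinite
  have h1 : aeval (fun x : Fin m × Fin m => M' x.1 x.2) (polyF m) = 0 := by
    have := aeval_algebraMap_apply L (fun x : Fin m × Fin m => M x.1 x.2) (polyF m)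
    rw [h, map_zero] at this
    exact this
  rw [polyF_eval _ _ hα] at h1
  have h2 := phi_scale α (algebraMap K L c) h1
  rw [← polyF_eval _ _ (charpoly_smul_prod M' α hα (algebraMap K L c)
    (by simpa using hc))] at h2
  have h3 := aeval_algebraMap_apply L (fun x : Fin m × Fin m => (c • M) x.1 x.2) (polyF m)
  have h4 : (algebraMap K L ∘ fun x : Fin m × Fin m => (c • M) x.1 x.2) =
      fun x : Fin m × Fin m => (algebraMap K L c • M') x.1 x.2 := by
    funext x; simp [M']
  change aeval (algebraMap K L ∘ fun x : Fin m × Fin m => (c • M) x.1 x.2) (polyF m) = _ at h3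
  rw [h4, h2] at h3
  exact hinj (by rw [map_zero]; exact h3.symm)

lemma polyF_scale {m : ℕ} {K : Type*} [Field K] (M : Matrix (Fin m) (Fin m) K) (c : K)
    (hc : c ≠ 0) (h : aeval (fun x : Fin m × Fin m => M x.1 x.2) (polyF m) = 0) :
    aeval (fun x : Fin m × Fin m => (c • M) x.1 x.2) (polyF m) = 0 :=
  polyF_scale_aux (AlgebraicClosure K) M c hc h

/-- the polynomial vanishes on unimodular matrices with reducible characteristic polynomial -/
lemma polyF_reducible {m : ℕ} (hm : 2 ≤ m) (g : Matrix.SpecialLinearGroup (Fin m) ℤ)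
    (hg : ¬ Irreducible ((Matrix.charpoly (g : Matrix (Fin m) (Fin m) ℤ)).map
      (algebraMap ℤ ℚ))) :
    aeval (fun x : Fin m × Fin m => (g : Matrix (Fin m) (Fin m) ℤ) x.1 x.2) (polyF m)
      = (0 : ℤ) := by
  set M : Matrix (Fin m) (Fin m) ℤ := g.1 with hM
  have hmon : M.charpoly.Monic := M.charpoly_monic
  have hdeg : M.charpoly.natDegree = m := by
    rw [Matrix.charpoly_natDegree_eq_dim, Fintype.card_fin]
  rw [← hmon.irreducible_iff_irreducible_map_fraction_map, hmon.irreducible_iff_natDegree] at hg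
  have hne : M.charpoly ≠ 1 := by
    intro h; rw [h] at hdeg; simp at hdeg; omega
  have : ∃ a b : Polynomial ℤ, a.Monic ∧ b.Monic ∧ a * b = M.charpoly ∧ a.natDegree ≠ 0 ∧
      b.natDegree ≠ 0 := by
    by_contra hcon
    refine hg ⟨hne, fun f g hf hg hfg => ?_⟩
    by_contra hcon2
    rw [not_or] at hcon2
    exact hcon ⟨f, g, hf, hg, hfg, hcon2.1, hcon2.2⟩
  obtain ⟨a, b, ha, hb, hab, ha0, hb0⟩ := this
  have hdab : a.natDegree + b.natDegree = m := by rw [← ha.natDegree_mul hb, hab, hdeg]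
  obtain ⟨α, hα⟩ := exists_roots (a.map (algebraMap ℤ ℂ)) (ha.map _) (ha.natDegree_map _)
  obtain ⟨β, hβ⟩ := exists_roots (b.map (algebraMap ℤ ℂ)) (hb.map _) (hb.natDegree_map _)
  let e : Fin a.natDegree ⊕ Fin b.natDegree ≃ Fin m := finSumFinEquiv.trans (finCongr hdab)
  let γ : Fin m → ℂ := fun i => Sum.elim α β (e.symm i)
  let M' := M.map (algebraMap ℤ ℂ)
  have hγ : M'.charpoly = ∏ i, (Polynomial.X - Polynomial.C (γ i)) := by
    rw [Matrix.charpoly_map, ← hab, Polynomial.map_mul, hα, hβ, ← e.prod_comp]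
    simp [γ]
  have hdet : ∏ i, γ i = 1 := by
    have h1 : (-1 : ℂ) ^ m * ∏ i, γ i = (-1) ^ m * M'.det := by
      rw [Matrix.det_eq_sign_charpoly_coeff, hγ, Polynomial.coeff_zero_eq_eval_zero,
        Polynomial.eval_prod]
      simp only [Polynomial.eval_sub, Polynomial.eval_X, Polynomial.eval_C, zero_sub,
        Finset.prod_neg, Fintype.card_fin, Finset.card_univ]
      rw [← mul_assoc ((-1 : ℂ) ^ m) ((-1) ^ m) , ← mul_pow]
      simp
    have h2 : M'.det = 1 := by
      have := g.2
      have h3 : M'.det = algebraMap ℤ ℂ M.det := (RingHom.map_det _ _).symm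
      rw [h3, hM, this, map_one]
    rw [h2] at h1
    exact mul_left_cancel₀ (by simp) h1
  have ha1 : (∏ i, α i) ^ 2 = 1 := by
    have h1 : (a.coeff 0) * (b.coeff 0) = (-1) ^ m := by
      rw [← Polynomial.mul_coeff_zero, hab]
      have h3 := Matrix.det_eq_sign_charpoly_coeff M
      have h4 : M.det = 1 := g.2
      rw [h4, Fintype.card_fin] at h3
      have h5 := congrArg (fun z => (-1) ^ m * z) h3
      simp only [mul_one, ← mul_assoc, ← mul_pow] at h5
      simpa using h5.symm
    have h2 : a.coeff 0 ^ 2 = 1 := by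
      have : IsUnit (a.coeff 0) := by
        refine IsUnit.of_mul_eq_one ((b.coeff 0) * (-1) ^ m) ?_
        rw [← mul_assoc, h1, ← mul_pow]; simp
      rcases Int.isUnit_iff.mp this with h | h <;> rw [h] <;> norm_num
    have h3 : (algebraMap ℤ ℂ (a.coeff 0)) = (-1) ^ a.natDegree * ∏ i, α i := by
      rw [← Polynomial.coeff_map, hα, Polynomial.coeff_zero_eq_eval_zero,
        Polynomial.eval_prod]
      simp [Finset.prod_neg]
    have h4 := congrArg (algebraMap ℤ ℂ) h2
    rw [map_pow, h3, map_one, mul_pow, ← pow_mul, mul_comm _ 2, pow_mul] at h4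
    simpa using h4
  have hz : aeval γ (phi m) = 0 := by
    rw [phi_eval, Finset.prod_eq_zero_iff]
    refine ⟨(Finset.univ : Finset (Fin a.natDegree)).map
      ⟨fun i => e (Sum.inl i), e.injective.comp Sum.inl_injective⟩, ?_, ?_⟩
    · rw [Finset.mem_filter]
      refine ⟨Finset.mem_univ _, ?_, ?_⟩
      · rw [Ne, ← Finset.card_eq_zero]; simpa using ha0
      · rw [Ne, ← Finset.card_eq_iff_eq_univ]; simp; omega
    · rw [hdet, Finset.prod_map]
      simp only [γ, Function.Embedding.coeFn_mk, Equiv.symm_apply_apply, Sum.elim_inl]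
      rw [pow_mul, ha1]
      simp
  rw [← polyF_eval M' γ hγ] at hz
  have h3 := aeval_algebraMap_apply ℂ (fun x : Fin m × Fin m => M x.1 x.2) (polyF m)
  have h4 : (algebraMap ℤ ℂ) (aeval (fun x : Fin m × Fin m => M x.1 x.2) (polyF m)) = 0 := by
    rw [← h3]; exact hz
  exact (FaithfulSMul.algebraMap_injective ℤ ℂ) (by rw [map_zero]; exact h4)

/-- the polynomial is nonzero at some diagonal matrix -/
lemma polyF_nonzero {m : ℕ} (hm : 2 ≤ m) : ∃ M : Matrix (Fin m) (Fin m) ℤ,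
    aeval (fun x : Fin m × Fin m => M x.1 x.2) (polyF m) ≠ (0 : ℤ) := by
  let i0 : Fin m := ⟨0, by omega⟩
  let d : Fin m → ℤ := fun i => if i = i0 then 2 else 1
  refine ⟨Matrix.diagonal d, fun h => ?_⟩
  have h3 := aeval_algebraMap_apply ℚ (fun x : Fin m × Fin m => Matrix.diagonal d x.1 x.2) (polyF m)
  rw [h, map_zero] at h3
  let α : Fin m → ℚ := fun i => if i = i0 then 2 else 1
  have h4 : aeval (fun x : Fin m × Fin m => Matrix.diagonal α x.1 x.2) (polyF m) = 0 := by
    rw [← h3]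
    congr 2
    funext x
    by_cases hx : x.1 = x.2
    · simp [Matrix.diagonal_apply, hx, α, d]
    · simp [Matrix.diagonal_apply, hx]
  rw [polyF_eval _ α (Matrix.charpoly_diagonal α), phi_eval, Finset.prod_eq_zero_iff] at h4
  obtain ⟨S, hS, h4⟩ := h4
  rw [Finset.mem_filter] at hS
  obtain ⟨-, hS0, hS1⟩ := hS
  have c0 : S.card ≠ 0 := by simpa using hS0
  have c1 : S.card ≠ m := by
    intro hc; exact hS1 (by rw [← Finset.card_eq_iff_eq_univ]; simpa using hc)
  have c2 : S.card ≤ m := by simpa using Finset.card_le_univ S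
  simp only [α, Finset.prod_ite_eq', Finset.mem_univ, if_true] at h4
  rw [sub_eq_zero] at h4
  split_ifs at h4 with hi
  · have := (pow_right_injective₀ (by norm_num : (0:ℚ) < 2) (by norm_num)) h4
    omega
  · have h5 : (2 : ℚ) ^ 0 = 2 ^ (2 * S.card) := by rw [← h4]; simp
    have := (pow_right_injective₀ (by norm_num : (0:ℚ) < 2) (by norm_num)) h5
    omega

end Poly


section Count

open MvPolynomial

variable {m : ℕ} (p : ℕ) [Fact p.Prime]

lemma zero_count (hF : ∃ M : Matrix (Fin m) (Fin m) (ZMod p),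
      aeval (fun x : Fin m × Fin m => M x.1 x.2) (polyF m) ≠ 0) :
    (Finset.univ.filter (fun M : Matrix (Fin m) (Fin m) (ZMod p) =>
      aeval (fun x : Fin m × Fin m => M x.1 x.2) (polyF m) = 0)).card * p ≤
      (polyF m).totalDegree * p ^ (m * m) := by
  have hp0 : 0 < p := (Fact.out : p.Prime).pos
  let e : Fin m × Fin m ≃ Fin (m * m) := finProdFinEquiv
  let q : MvPolynomial (Fin (m * m)) (ZMod p) :=
    rename e (map (algebraMap ℤ (ZMod p)) (polyF m))
  have hev : ∀ f : Fin (m * m) → ZMod p, eval f q = aeval (f ∘ e) (polyF m) := by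
    intro f
    simp only [q, eval_rename, eval_map]
    rfl
  have hq : q ≠ 0 := by
    obtain ⟨M, hM⟩ := hF
    intro h0
    apply hM
    have h1 := hev ((fun x : Fin m × Fin m => M x.1 x.2) ∘ e.symm)
    rw [h0, map_zero, Function.comp_assoc, Equiv.symm_comp_self, Function.comp_id] at h1
    exact h1.symm
  have hdeg : q.totalDegree ≤ (polyF m).totalDegree :=
    (totalDegree_rename_le _ _).trans (Finset.sup_mono (support_map_subset _ _))
  have hsz := schwartz_zippel_totalDegree hq (Finset.univ : Finset (ZMod p))
  have hcard : (Finset.univ.filter (fun M : Matrix (Fin m) (Fin m) (ZMod p) =>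
      aeval (fun x : Fin m × Fin m => M x.1 x.2) (polyF m) = 0)).card ≤
      (Finset.filter (fun f => eval f q = 0)
        (Fintype.piFinset fun _ : Fin (m * m) => (Finset.univ : Finset (ZMod p)))).card := by
    refine Finset.card_le_card_of_injOn
      (fun M => (fun x : Fin m × Fin m => M x.1 x.2) ∘ e.symm) ?_ ?_
    · intro M hM
      simp only [Finset.coe_filter, Finset.mem_univ, true_and, Set.mem_ofPred_eq] at hM
      simp only [Finset.coe_filter, Set.mem_ofPred_eq, Fintype.mem_piFinset, Finset.mem_univ,
        implies_true, true_and]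
      rw [hev, Function.comp_assoc, Equiv.symm_comp_self, Function.comp_id]
      exact hM
    · intro M _ M' _ h
      ext i j
      have := congrFun h (e (i, j))
      simpa using this
  rw [Finset.card_univ, ZMod.card] at hsz
  have hpQ : (0 : ℚ≥0) < p := by exact_mod_cast hp0
  rw [div_le_div_iff₀ (by positivity) hpQ] at hsz
  have hsz' : (Finset.filter (fun f => eval f q = 0)
        (Fintype.piFinset fun _ : Fin (m * m) => (Finset.univ : Finset (ZMod p)))).card * p ≤
      q.totalDegree * p ^ (m * m) := by exact_mod_cast hsz
  calc _ ≤ _ := Nat.mul_le_mul_right p hcard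
    _ ≤ _ := hsz'
    _ ≤ _ := Nat.mul_le_mul_right _ hdeg

lemma card_GL_lower : p ^ (m * m) ≤ 2 ^ m * Nat.card (Matrix.GeneralLinearGroup (Fin m) (ZMod p)) := by
  have hp2 : 2 ≤ p := (Fact.out : p.Prime).two_le
  rw [Matrix.card_GL_field, ZMod.card]
  have h1 : 2 ^ m = ∏ _i : Fin m, 2 := by simp
  have h2 : p ^ (m * m) = ∏ _i : Fin m, p ^ m := by simp [pow_mul]
  rw [h1, h2, ← Finset.prod_mul_distrib]
  refine Finset.prod_le_prod' fun i _ => ?_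
  have h3 : p ^ (i : ℕ) * 2 ≤ p ^ m := by
    calc p ^ (i : ℕ) * 2 ≤ p ^ (i : ℕ) * p := Nat.mul_le_mul_left _ hp2
      _ = p ^ ((i : ℕ) + 1) := (pow_succ _ _).symm
      _ ≤ p ^ m := Nat.pow_le_pow_right (by omega) i.2
  omega

lemma card_GL_le (hm : 2 ≤ m) : Nat.card (Matrix.GeneralLinearGroup (Fin m) (ZMod p)) ≤
    (p - 1) * Fintype.card (Matrix.SpecialLinearGroup (Fin m) (ZMod p)) := by
  rw [← ZMod.card_units p, ← Fintype.card_prod, ← Nat.card_eq_fintype_card]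
  let i0 : Fin m := ⟨0, by omega⟩
  let D : (ZMod p)ˣ → Matrix (Fin m) (Fin m) (ZMod p) := fun u =>
    Matrix.diagonal (fun i => if i = i0 then ((u⁻¹ : (ZMod p)ˣ) : ZMod p) else 1)
  have hD : ∀ u, (D u).det = ((u⁻¹ : (ZMod p)ˣ) : ZMod p) := by
    intro u
    simp only [D, Matrix.det_diagonal]
    rw [Finset.prod_ite_eq' Finset.univ i0, if_pos (Finset.mem_univ _)]
  let f : Matrix.GeneralLinearGroup (Fin m) (ZMod p) →
      (ZMod p)ˣ × Matrix.SpecialLinearGroup (Fin m) (ZMod p) := fun g =>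
    (Matrix.GeneralLinearGroup.det g, ⟨D (Matrix.GeneralLinearGroup.det g) * g.1, by
      rw [Matrix.det_mul, hD, ← Matrix.GeneralLinearGroup.val_det_apply, Units.inv_mul]⟩)
  refine Nat.card_le_card_of_injective f ?_
  intro g g' h
  have h1 : Matrix.GeneralLinearGroup.det g = Matrix.GeneralLinearGroup.det g' :=
    congrArg Prod.fst h
  have h2 : D (Matrix.GeneralLinearGroup.det g) * g.1 =
    D (Matrix.GeneralLinearGroup.det g') * g'.1 := congrArg (fun z => z.2.1) h
  rw [← h1] at h2
  have h3 : IsUnit (D (Matrix.GeneralLinearGroup.det g)) := by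
    rw [Matrix.isUnit_iff_isUnit_det, hD]; exact Units.isUnit _
  exact Units.ext (h3.mul_left_cancel h2)

/-- the zero locus of the polynomial in the finite special linear group -/
noncomputable def badSet (m p : ℕ) [Fact p.Prime] :
    Finset (Matrix.SpecialLinearGroup (Fin m) (ZMod p)) :=
  Finset.univ.filter (fun g => aeval (fun x : Fin m × Fin m => g.1 x.1 x.2) (polyF m) = 0)

lemma badSet_card_aux (hm : 2 ≤ m) : (p - 1) * (badSet m p).card ≤
    m * (Finset.univ.filter (fun M : Matrix (Fin m) (Fin m) (ZMod p) =>
      aeval (fun x : Fin m × Fin m => M x.1 x.2) (polyF m) = 0)).card := by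
  classical
  let s : Finset ((ZMod p)ˣ × Matrix.SpecialLinearGroup (Fin m) (ZMod p)) :=
    Finset.univ ×ˢ badSet m p
  let f : (ZMod p)ˣ × Matrix.SpecialLinearGroup (Fin m) (ZMod p) →
    Matrix (Fin m) (Fin m) (ZMod p) := fun x => (x.1 : ZMod p) • x.2.1
  have hs : s.card = (p - 1) * (badSet m p).card := by
    rw [Finset.card_product, Finset.card_univ, ZMod.card_units]
  rw [← hs]
  have himg : s.image f ⊆ Finset.univ.filter (fun M : Matrix (Fin m) (Fin m) (ZMod p) =>
      aeval (fun x : Fin m × Fin m => M x.1 x.2) (polyF m) = 0) := by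
    intro M hM
    obtain ⟨⟨c, g⟩, hx, rfl⟩ := Finset.mem_image.mp hM
    rw [Finset.mem_filter]
    refine ⟨Finset.mem_univ _, ?_⟩
    have hg : g ∈ badSet m p := (Finset.mem_product.mp hx).2
    rw [badSet, Finset.mem_filter] at hg
    exact polyF_scale g.1 c c.ne_zero hg.2
  refine (Finset.card_le_mul_card_image s m ?_).trans
    (Nat.mul_le_mul_left m (Finset.card_le_card himg))
  intro M _
  calc (s.filter (fun x => f x = M)).card ≤ (Polynomial.nthRoots m M.det).toFinset.card := by
        refine Finset.card_le_card_of_injOn (fun x => (x.1 : ZMod p)) ?_ ?_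
        · rintro ⟨c, g⟩ hx
          have hx2 : f (c, g) = M := (Finset.mem_filter.mp hx).2
          simp only [Finset.mem_coe, Multiset.mem_toFinset]
          rw [Polynomial.mem_nthRoots (by omega), ← hx2]
          simp [f, Matrix.det_smul]
        · rintro ⟨c, g⟩ hx ⟨c', g'⟩ hx' h
          have hx2 : f (c, g) = M := (Finset.mem_filter.mp hx).2
          have hx2' : f (c', g') = M := (Finset.mem_filter.mp hx').2
          have hc : c = c' := Units.ext h
          subst hc
          have h5 : (c : ZMod p) • g.1 = (c : ZMod p) • g'.1 := hx2.trans hx2'.symm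
          have h6 : g.1 = g'.1 := smul_right_injective _ c.ne_zero h5
          rw [Subtype.ext h6]
    _ ≤ _ := (Multiset.toFinset_card_le _).trans (Polynomial.card_nthRoots _ _)

lemma badSet_card (hm : 2 ≤ m) (hF : ∃ M : Matrix (Fin m) (Fin m) (ZMod p),
      aeval (fun x : Fin m × Fin m => M x.1 x.2) (polyF m) ≠ 0) :
    (badSet m p).card * p ≤ m * (polyF m).totalDegree * 2 ^ m *
      Fintype.card (Matrix.SpecialLinearGroup (Fin m) (ZMod p)) := by
  have hp2 : 2 ≤ p := (Fact.out : p.Prime).two_le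
  have h1 := badSet_card_aux p hm
  have h2 := zero_count p hF
  have h3 := card_GL_lower (m := m) p
  have h4 := card_GL_le p hm
  refine Nat.le_of_mul_le_mul_left ?_ (show 0 < p - 1 by omega)
  calc (p - 1) * ((badSet m p).card * p) = ((p - 1) * (badSet m p).card) * p := by ring
    _ ≤ _ := Nat.mul_le_mul_right p h1
    _ = m * (_ * p) := by ring
    _ ≤ _ := Nat.mul_le_mul_left m h2
    _ = (m * (polyF m).totalDegree) * p ^ (m * m) := by ring
    _ ≤ _ := Nat.mul_le_mul_left _ (h3.trans (Nat.mul_le_mul_left _ h4))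
    _ = _ := by ring

end Count


lemma good_prime {m : ℕ} (hm : 2 ≤ m) {ε : ℝ} (hε : 0 < ε) : ∃ (p : ℕ) (_ : Fact p.Prime),
    3 < p ∧ 2 * ((badSet m p).card /
      (Fintype.card (Matrix.SpecialLinearGroup (Fin m) (ZMod p)) : ℝ)) < ε := by
  obtain ⟨M, hM⟩ := polyF_nonzero hm
  set v : ℤ := MvPolynomial.aeval (fun x : Fin m × Fin m => M x.1 x.2) (polyF m) with hv
  set C : ℝ := ((m * (polyF m).totalDegree * 2 ^ m : ℕ) : ℝ) with hC
  obtain ⟨R, hR⟩ := exists_nat_gt (2 * C / ε)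
  obtain ⟨p, hp, hprime⟩ := Nat.exists_infinite_primes (R + v.natAbs + 4)
  haveI : Fact p.Prime := ⟨hprime⟩
  refine ⟨p, ⟨hprime⟩, by omega, ?_⟩
  have hF : ∃ M : Matrix (Fin m) (Fin m) (ZMod p),
      MvPolynomial.aeval (fun x : Fin m × Fin m => M x.1 x.2) (polyF m) ≠ 0 := by
    refine ⟨M.map (algebraMap ℤ (ZMod p)), fun h0 => ?_⟩
    have h1 := MvPolynomial.aeval_algebraMap_apply (ZMod p)
      (fun x : Fin m × Fin m => M x.1 x.2) (polyF m)
    have h2 : algebraMap ℤ (ZMod p) v = 0 := by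
      rw [hv, ← h1]; exact h0
    have h3 : (p : ℤ) ∣ v := by
      rw [← ZMod.intCast_zmod_eq_zero_iff_dvd]
      simpa using h2
    have h4 := Int.natAbs_dvd_natAbs.mpr h3
    have h5 := Nat.le_of_dvd (Int.natAbs_pos.mpr hM) h4
    simp at h5
    omega
  have h1 := badSet_card p hm hF
  have hc : (0 : ℝ) < Fintype.card (Matrix.SpecialLinearGroup (Fin m) (ZMod p)) := by
    exact_mod_cast Fintype.card_pos
  have h2 : ((badSet m p).card : ℝ) * p ≤
      C * Fintype.card (Matrix.SpecialLinearGroup (Fin m) (ZMod p)) := by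
    rw [hC]; exact_mod_cast h1
  have hp0 : (0 : ℝ) < p := by exact_mod_cast hprime.pos
  have hRp : (R : ℝ) ≤ p := by exact_mod_cast (by omega : R ≤ p)
  have h3 : 2 * C < ε * p := by
    rw [div_lt_iff₀ hε] at hR
    nlinarith
  have h4 : ((badSet m p).card : ℝ) /
      (Fintype.card (Matrix.SpecialLinearGroup (Fin m) (ZMod p)) : ℝ) ≤ C / p := by
    rw [div_le_div_iff₀ hc hp0]; exact h2
  have h5 : 2 * (C / p) < ε := by
    rw [← mul_div_assoc, div_lt_iff₀ hp0]; exact h3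
  linarith

lemma reducible_mem_badSet {m : ℕ} (hm : 2 ≤ m) (p : ℕ) [Fact p.Prime]
    (g : Matrix.SpecialLinearGroup (Fin m) ℤ)
    (hg : ¬ Irreducible ((Matrix.charpoly (g : Matrix (Fin m) (Fin m) ℤ)).map
      (algebraMap ℤ ℚ))) :
    Matrix.SpecialLinearGroup.map (Int.castRingHom (ZMod p)) g ∈ badSet m p := by
  rw [badSet, Finset.mem_filter]
  refine ⟨Finset.mem_univ _, ?_⟩
  have h1 := MvPolynomial.aeval_algebraMap_apply (ZMod p)
      (fun x : Fin m × Fin m => (g : Matrix (Fin m) (Fin m) ℤ) x.1 x.2) (polyF m)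
  rw [polyF_reducible hm g hg, map_zero] at h1
  exact h1

end RW

open scoped Classical in
/-- in a walk setup on `SL(m, ℤ)` with generating labels, the
proportion (by weight) of walks of length `N` whose product has reducible
characteristic polynomial over `ℚ` tends to `0` as `N → ∞`. -/
theorem stmt10 (m : ℕ) (hm : 2 ≤ m)
    (n : ℕ) (hn : 1 ≤ n) (A : Fin n → Fin n → ℕ)
    (t : Fin n → Matrix.SpecialLinearGroup (Fin m) ℤ)
    (hsymm : ∀ i j, A i j = A j i)
    (hprim : ∃ k, 1 ≤ k ∧ ∀ i j, 0 < ((Matrix.of A) ^ k) i j)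
    (hgen : Subgroup.closure (Set.range t) = ⊤) :
    Filter.Tendsto (fun N : ℕ =>
        (∑ w ∈ Finset.univ.filter
            (fun w : Fin (N + 1) → Fin n =>
              ¬ Irreducible
                ((Matrix.charpoly
                    (((List.ofFn fun j => t (w j)).reverse.prod :
                        Matrix.SpecialLinearGroup (Fin m) ℤ) :
                      Matrix (Fin m) (Fin m) ℤ)).map
                  (algebraMap ℤ ℚ))),
          ((∏ j : Fin N, A (w j.castSucc) (w j.succ) : ℕ) : ℝ)) /
        (∑ w : Fin (N + 1) → Fin n,
          ((∏ j : Fin N, A (w j.castSucc) (w j.succ) : ℕ) : ℝ)))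
      Filter.atTop (nhds 0) := by
  rw [Metric.tendsto_atTop]
  intro ε hε
  obtain ⟨p, hpf, hp3, hpε⟩ := RW.good_prime hm hε
  let φ := Matrix.SpecialLinearGroup.map (n := Fin m) (Int.castRingHom (ZMod p))
  haveI : Nontrivial (Fin m) := Fin.nontrivial_iff_two_le.mpr hm
  have hgen' : Subgroup.closure (Set.range fun i => φ (t i)) = ⊤ := by
    have h1 : (Set.range fun i => φ (t i)) = φ '' Set.range t := by
      rw [← Set.range_comp]; rfl
    rw [h1, ← MonoidHom.map_closure, hgen, ← MonoidHom.range_eq_map, MonoidHom.range_eq_top]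
    exact RW.SL_map_surjective p
  have hne : ∀ k : ℕ, 0 < k → k < p → (k : ZMod p) ≠ 0 := by
    intro k hk hkp h
    rw [ZMod.natCast_eq_zero_iff] at h
    exact absurd (Nat.le_of_dvd hk h) (by omega)
  have hperf : commutator (Matrix.SpecialLinearGroup (Fin m) (ZMod p)) = ⊤ := by
    refine RW.commutator_SL_eq_top (2 : ZMod p) ?_ ?_
    · exact_mod_cast hne 2 (by omega) (by omega)
    · intro h
      refine hne 3 (by omega) (by omega) ?_
      push_cast
      linear_combination h
  obtain ⟨N₀, hN₀⟩ := RW.walks_main (t := fun i => φ (t i)) hsymm hprim hgen' hperf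
    (RW.badSet m p) (ε := 1) one_pos
  refine ⟨N₀, fun N hN => ?_⟩
  have hpos := RW.walks_total_pos hn hprim N
  have hmain := hN₀ N hN
  have hle : ∑ w ∈ Finset.univ.filter
            (fun w : Fin (N + 1) → Fin n =>
              ¬ Irreducible
                ((Matrix.charpoly
                    (((List.ofFn fun j => t (w j)).reverse.prod :
                        Matrix.SpecialLinearGroup (Fin m) ℤ) :
                      Matrix (Fin m) (Fin m) ℤ)).map
                  (algebraMap ℤ ℚ))),
          ((∏ j : Fin N, A (w j.castSucc) (w j.succ) : ℕ) : ℝ) ≤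
      ∑ w ∈ Finset.univ.filter (fun w : Fin (N + 1) → Fin n =>
        (List.ofFn fun j => φ (t (w j))).reverse.prod ∈ RW.badSet m p),
        ((∏ j : Fin N, A (w j.castSucc) (w j.succ) : ℕ) : ℝ) := by
    refine Finset.sum_le_sum_of_subset_of_nonneg ?_ (fun _ _ _ => Nat.cast_nonneg _)
    intro w hw
    rw [Finset.mem_filter] at hw ⊢
    refine ⟨Finset.mem_univ _, ?_⟩
    have h1 := RW.reducible_mem_badSet hm p _ hw.2
    have h2 : φ (List.ofFn fun j => t (w j)).reverse.prod =
        (List.ofFn fun j => φ (t (w j))).reverse.prod := by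
      rw [map_list_prod, List.map_reverse, List.map_ofFn]
      rfl
    rw [← h2]
    exact h1
  rw [Real.dist_eq, sub_zero, abs_of_nonneg (div_nonneg
    (Finset.sum_nonneg fun _ _ => Nat.cast_nonneg _) hpos.le), div_lt_iff₀ hpos]
  refine lt_of_le_of_lt (hle.trans (le_of_eq_of_le ?_ hmain)) ?_
  · congr
  · refine mul_lt_mul_of_pos_right ?_ hpos
    norm_num at hpε ⊢
    exact hpε
end
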